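/- arXiv:1510.00316 — 2 statements merged into one kernel-verified Lean document; each statement's English description precedes it below -/
import Mathlib

section
/- Let Ω ⊆ ℝ^N be a domain, let p_ε : Ω → ℝ be Lipschitz with 1 < p_min ≤ p_ε(x) ≤ p_max < ∞, let f^ε ∈ L^∞(Ω), and let u^ε be a solution of P_ε(f^ε, p_ε) in Ω with |∇u^ε| locally bounded in Ω. Then for every ψ ∈ C_c^∞(Ω) the following identity holds: −∫_Ω (|∇u^ε|^{p_ε}/p_ε) ∂_{x₁}ψ dx + ∫_Ω |∇u^ε|^{p_ε−2} ⟨∇u^ε, ∇ψ⟩ ∂_{x₁}u^ε dx + ∫_Ω f^ε (∂_{x₁}u^ε) ψ dx = ∫_Ω (|∇u^ε|^{p_ε}/p_ε) log|∇u^ε| (∂_{x₁}p_ε) ψ dx − ∫_Ω (|∇u^ε|^{p_ε}/p_ε²) (∂_{x₁}p_ε) ψ dx + ∫_Ω B_ε(u^ε) ∂_{x₁}ψ dx, where ∂_{x₁}p_ε is the almost-everywhere defined partial derivative of the Lipschitz function p_ε, B_ε(s) = ∫₀^s β_ε(τ) dτ, and the convention t^{p} log t := 0 at t = 0 is used in the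 first term on the right. -/
/-!
Formally the identity is obtained by multiplying the equation by `ψ ∂₁u` and integrating by parts,
but `u` is only `C¹`, so `∇∂₁u` need not exist and `ψ ∂₁u` is not an admissible test function. The
proof uses difference quotients and convexity instead of second derivatives.

Write `A = |∇u|^(p-2) ∇u`. The equation extends from smooth to `C¹` test functions by mollification
(`weak_eq_of_contDiff_one`), so it can be tested with `ψ(x) (u(x + t e) - u(x)) / t`, where `ψ ≥ 0`
and `t > 0`. The only term without an evident limit as `t → 0+` is
`ψ ⟨A, ∇u(x + t e) - ∇u(x)⟩ / t`, and convexity of `ξ ↦ |ξ|^p / p` (`rpow_norm_tangent_le`) bounds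
it above by `ψ(x) (|∇u(x + t e)|^p(x) - |∇u(x)|^p(x)) / (t p(x))`. After a translation in the first
summand the increment `t e` falls on `ψ` and on the exponent `p`, while `∇u` is always evaluated
at `x`; both are Lipschitz, so by Rademacher's theorem and dominated convergence the integral
converges (`tendsto_integral_dens_quotient`). The limit is one inequality of the identity in the
direction `e` (`integral_pohoIntegrand_nonneg`), and the same inequality in the direction `-e` is
the opposite one. A general `ψ` is a difference of two nonnegative test functions
(`integral_pohoIntegrand_eq_zero`).

This argument is carried out on the whole space for compactly supported `u`. Since the identity is
local, the original data may be replaced by such data agreeing with them near the support of `ψ`.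
Finally `β_ε(u) ∂₁u = ∂₁(B_ε(u))`, and an integration by parts gives the term with `B_ε`.
-/

open MeasureTheory Metric Set Filter Topology Asymptotics RealInnerProductSpace

noncomputable section

abbrev Euc (N : ℕ) : Type := EuclideanSpace ℝ (Fin N)

/-- `φ` is an admissible test function on `Ω`: smooth with compact support contained in `Ω`. -/
def IsTest {N : ℕ} (Ω : Set (Euc N)) (φ : Euc N → ℝ) : Prop :=
  ContDiff ℝ (⊤ : ℕ∞) φ ∧ HasCompactSupport φ ∧ tsupport φ ⊆ Ω

/-- `u ∈ C¹(Ω)` is a weak solution of `Δ_{q(x)} u = g` in `Ω`: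
`∫_Ω |∇u|^{q(x)-2} ⟨∇u, ∇φ⟩ = -∫_Ω g φ` for all test functions `φ`. -/
def IsWeakSol {N : ℕ} (Ω : Set (Euc N)) (q u g : Euc N → ℝ) : Prop :=
  ContDiffOn ℝ 1 u Ω ∧
    ∀ φ : Euc N → ℝ, IsTest Ω φ →
      (∫ x in Ω, ‖gradient u x‖ ^ (q x - 2) * ⟪gradient u x, gradient φ x⟫)
        = - ∫ x in Ω, g x * φ x

/-- The structural hypotheses on `β`: Lipschitz, positive exactly on `(0,1)`, with integral `M > 0`. -/
structure IsBeta (β : ℝ → ℝ) (M : ℝ) : Prop where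
  lipschitz : ∃ K : NNReal, LipschitzWith K β
  pos : ∀ s ∈ Set.Ioo (0:ℝ) 1, 0 < β s
  vanish : ∀ s ∉ Set.Ioo (0:ℝ) 1, β s = 0
  integral : (∫ s in (0:ℝ)..1, β s) = M
  M_pos : 0 < M

/-- `β_ε(s) = (1/ε) β(s/ε)`. -/
def betaEps (β : ℝ → ℝ) (ε s : ℝ) : ℝ := (1 / ε) * β (s / ε)

/-- A nonnegative `u ∈ C¹(Ω)` solving `Δ_{p_ε(x)} u = β_ε(u) + f` weakly in `Ω`,
i.e. a solution of `P_ε(f, p_ε)` in `Ω`. -/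
def IsSolPe {N : ℕ} (Ω : Set (Euc N)) (β : ℝ → ℝ) (ε : ℝ) (pe f u : Euc N → ℝ) : Prop :=
  (∀ x ∈ Ω, 0 ≤ u x) ∧ IsWeakSol Ω pe u (fun x => betaEps β ε (u x) + f x)

/-- `B_ε(s) = ∫₀^s β_ε(τ) dτ`. -/
def Bfun (β : ℝ → ℝ) (ε s : ℝ) : ℝ := ∫ τ in (0:ℝ)..s, betaEps β ε τ

/-- The first standard basis vector of `ℝ^{N+1}`. -/
def e1 (N : ℕ) : Euc (N + 1) := EuclideanSpace.single 0 1

/-! ### Convexity and cutoff functions -/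

/-- Convexity of `ξ ↦ |ξ|^p / p` on an inner product space: its graph lies above its tangent
hyperplane at `a`, whose slope is `|a|^(p-2) a`. -/
lemma rpow_norm_tangent_le {n : ℕ} (a b : Euc n) {p : ℝ} (hp : 1 < p) :
    ‖a‖ ^ (p - 2) * ⟪a, b - a⟫ ≤ ‖b‖ ^ p / p - ‖a‖ ^ p / p := by
  have hp0 : 0 < p := by linarith
  rcases eq_or_ne a 0 with rfl | ha
  · have : 0 ≤ ‖b‖ ^ p / p := by positivity
    simpa [Real.zero_rpow hp0.ne'] using this
  have ha' : 0 < ‖a‖ := norm_pos_iff.mpr ha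
  have hq := Real.HolderConjugate.conjExponent hp
  have hy := Real.young_inequality_of_nonneg (norm_nonneg b)
    (by positivity : 0 ≤ ‖a‖ ^ (p - 1)) hq
  have e1 : (‖a‖ ^ (p - 1)) ^ p.conjExponent = ‖a‖ ^ p := by
    rw [← Real.rpow_mul ha'.le, hq.sub_one_mul_conj]
  have e2 : ‖a‖ ^ (p - 2) * ‖a‖ = ‖a‖ ^ (p - 1) := by
    rw [← Real.rpow_add_one ha'.ne']; congr 1; ring
  have e3 : ‖a‖ ^ (p - 1) * ‖a‖ = ‖a‖ ^ p := by
    rw [← Real.rpow_add_one ha'.ne']; congr 1; ring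
  have e4 : ‖a‖ ^ p / p.conjExponent = ‖a‖ ^ p - ‖a‖ ^ p / p := by
    have := hq.inv_add_inv_eq_one
    rw [div_eq_mul_inv, div_eq_mul_inv]; linear_combination ‖a‖ ^ p * this
  have h1 : ‖a‖ ^ (p - 2) * ⟪a, b⟫ ≤ ‖b‖ * ‖a‖ ^ (p - 1) := by
    calc ‖a‖ ^ (p - 2) * ⟪a, b⟫ ≤ ‖a‖ ^ (p - 2) * (‖a‖ * ‖b‖) := by
          gcongr; exact real_inner_le_norm a b
      _ = ‖b‖ * ‖a‖ ^ (p - 1) := by rw [← e2]; ring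
  rw [e1, e4] at hy
  have h2 : ‖a‖ ^ (p - 2) * ⟪a, a⟫ = ‖a‖ ^ p := by
    rw [real_inner_self_eq_norm_mul_norm, ← mul_assoc, e2, e3]
  rw [inner_sub_right, mul_sub, h2]
  linarith

/-- A smooth nonnegative cutoff function on `Ω` which equals `1` on a whole neighbourhood of the
compact set `K`. -/
lemma exists_cutoff {n : ℕ} {Ω K : Set (Euc n)} (hΩ : IsOpen Ω) (hK : IsCompact K)
    (hKΩ : K ⊆ Ω) :
    ∃ χ : Euc n → ℝ, IsTest Ω χ ∧ (∀ x, 0 ≤ χ x) ∧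
      ∃ W : Set (Euc n), IsOpen W ∧ K ⊆ W ∧ W ⊆ Ω ∧ ∀ x ∈ W, χ x = 1 := by
  obtain ⟨L, hL, hKL, hLΩ⟩ := exists_compact_between hK hΩ hKΩ
  obtain ⟨f, hf1, hf0, hfI⟩ := exists_contMDiffMap_one_nhds_of_subset_interior
    (n := (⊤ : ℕ∞)) (modelWithCornersSelf ℝ (Euc n)) hK.isClosed hKL
  have hsupp : tsupport f ⊆ L := by
    refine closure_minimal (fun x hx => ?_) hL.isClosed
    by_contra h
    exact hx (hf0 x h)
  obtain ⟨W, hWK, hW, hWf⟩ : ∃ W, K ⊆ W ∧ IsOpen W ∧ ∀ x ∈ W, f x = 1 := by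
    obtain ⟨W, hW, hKW, h⟩ := mem_nhdsSet_iff_exists.mp hf1
    exact ⟨W, hKW, hW, fun x hx => h hx⟩
  exact ⟨f, ⟨f.contMDiff.contDiff, hL.of_isClosed_subset (isClosed_tsupport _) hsupp,
    hsupp.trans hLΩ⟩, fun x => (hfI x).1, W ∩ Ω, hW.inter hΩ, subset_inter hWK hKΩ,
    inter_subset_right, fun x hx => hWf x hx.1⟩

/-! ### Test functions of class `C¹` -/

/-- A divergence-form equation with integrable data that holds for smooth test functions also
holds for test functions that are only `C¹`. The approximation is by mollification, with radii so
small that the supports stay in `W`; values and derivatives converge pointwise and boundedly. -/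
lemma weak_eq_of_contDiff_one {n : ℕ} {A : Euc n → Euc n} {G : Euc n → ℝ} (hA : Integrable A)
    (hG : Integrable G) {W : Set (Euc n)} (hW : IsOpen W)
    (h : ∀ φ, IsTest W φ → ∫ x, fderiv ℝ φ x (A x) = - ∫ x, G x * φ x)
    {φ : Euc n → ℝ} (hφ : ContDiff ℝ 1 φ) (hc : HasCompactSupport φ) (hs : tsupport φ ⊆ W) :
    ∫ x, fderiv ℝ φ x (A x) = - ∫ x, G x * φ x := by
  obtain ⟨δ, hδ, hδW⟩ := hc.isCompact.exists_cthickening_subset_open hW hs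
  let b : ℕ → ContDiffBump (0 : Euc n) := fun k =>
    ⟨δ / (k + 3), δ / (k + 2), by positivity, by gcongr; norm_num⟩
  have hb0 : Tendsto (fun k => (b k).rOut) atTop (𝓝 0) := by
    have := tendsto_natCast_atTop_atTop (R := ℝ)
    exact Tendsto.div_atTop tendsto_const_nhds (tendsto_atTop_add_const_right _ _ this)
  have hbδ : ∀ k, (b k).rOut ≤ δ := fun k => by
    change δ / (k + 2) ≤ δ
    apply div_le_self hδ.le
    have : (0 : ℝ) ≤ k := by positivity
    linarith
  let φk : ℕ → Euc n → ℝ := fun k =>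
    convolution ((b k).normed volume) φ (ContinuousLinearMap.lsmul ℝ ℝ) volume
  have hfc : Continuous (fderiv ℝ φ) := hφ.continuous_fderiv one_ne_zero
  have hd : ∀ k x, fderiv ℝ (φk k) x =
      convolution ((b k).normed volume) (fderiv ℝ φ) (ContinuousLinearMap.lsmul ℝ ℝ) volume x := by
    intro k x
    have := (hc.hasFDerivAt_convolution_right (ContinuousLinearMap.lsmul ℝ ℝ)
      (((b k).continuous_normed (μ := volume)).locallyIntegrable (μ := volume)) hφ x).fderiv
    rw [this]
    congr 1
  have htest : ∀ k, IsTest W (φk k) := by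
    intro k
    have h1 : tsupport (φk k) ⊆ cthickening δ (tsupport φ) := by
      refine closure_minimal (fun x hx => ?_) isClosed_cthickening
      obtain ⟨y, hy, z, hz, rfl⟩ := support_convolution_subset _ hx
      rw [(b k).support_normed_eq, mem_ball_zero_iff] at hy
      refine mem_cthickening_of_dist_le _ z δ _ (subset_tsupport _ hz) ?_
      simpa using hy.le.trans (hbδ k)
    refine ⟨?_, hc.isCompact.cthickening.of_isClosed_subset (isClosed_tsupport _) h1, h1.trans hδW⟩
    exact ((b k).hasCompactSupport_normed (μ := volume)).contDiff_convolution_left _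
      (b k).contDiff_normed (hφ.continuous.locallyIntegrable (μ := volume))
  obtain ⟨C0, hC0⟩ := hc.exists_bound_of_continuous hφ.continuous
  obtain ⟨C1, hC1⟩ := (hc.fderiv ℝ).exists_bound_of_continuous hfc
  have hB0 : ∀ k x, ‖φk k x‖ ≤ 3 * C0 := by
    intro k x
    have := ContDiffBump.dist_normed_convolution_le (φ := b k) (μ := volume) (x₀ := x) (ε := 2 * C0)
      hφ.continuous.aestronglyMeasurable (fun y _ => by
        rw [dist_eq_norm]; linarith [norm_sub_le (φ y) (φ x), hC0 x, hC0 y])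
    rw [dist_eq_norm] at this
    have h2 := norm_sub_norm_le (φk k x) (φ x)
    have h3 : ‖φk k x - φ x‖ ≤ 2 * C0 := this
    linarith [hC0 x]
  have hB1 : ∀ k x, ‖fderiv ℝ (φk k) x‖ ≤ 3 * C1 := by
    intro k x
    have := ContDiffBump.dist_normed_convolution_le (φ := b k) (μ := volume) (x₀ := x) (ε := 2 * C1)
      hfc.aestronglyMeasurable (fun y _ => by
        rw [dist_eq_norm]; linarith [norm_sub_le (fderiv ℝ φ y) (fderiv ℝ φ x), hC1 x, hC1 y])
    rw [← hd, dist_eq_norm] at this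
    have h2 := norm_sub_norm_le (fderiv ℝ (φk k) x) (fderiv ℝ φ x)
    linarith [hC1 x]
  have hL1 : Tendsto (fun k => ∫ x, fderiv ℝ (φk k) x (A x)) atTop
      (𝓝 (∫ x, fderiv ℝ φ x (A x))) := by
    refine tendsto_integral_of_dominated_convergence (fun x => 3 * C1 * ‖A x‖) (fun k => ?_)
      (hA.norm.const_mul _) (fun k => ae_of_all _ fun x => ?_) (ae_of_all _ fun x => ?_)
    · have := ((htest k).1.continuous_fderiv (by simp)).aestronglyMeasurable (μ := volume)
      exact (isBoundedBilinearMap_apply (𝕜 := ℝ)).continuous.comp_aestronglyMeasurable₂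
        this hA.aestronglyMeasurable
    · exact (ContinuousLinearMap.le_opNorm _ _).trans (by gcongr; exact hB1 k x)
    · have := ContDiffBump.convolution_tendsto_right_of_continuous (μ := volume) hb0 hfc x
      simp_rw [← hd] at this
      exact ((ContinuousLinearMap.apply ℝ ℝ (A x)).continuous.tendsto _).comp this
  have hL2 : Tendsto (fun k => - ∫ x, G x * φk k x) atTop (𝓝 (- ∫ x, G x * φ x)) := by
    refine (tendsto_integral_of_dominated_convergence (fun x => ‖G x‖ * (3 * C0)) (fun k => ?_)
      (hG.norm.mul_const _) (fun k => ae_of_all _ fun x => ?_) (ae_of_all _ fun x => ?_)).neg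
    · exact hG.aestronglyMeasurable.mul (htest k).1.continuous.aestronglyMeasurable
    · rw [norm_mul]; gcongr; exact hB0 k x
    · exact (ContDiffBump.convolution_tendsto_right_of_continuous (μ := volume) hb0
        hφ.continuous x).const_mul _
  simp_rw [fun k => h _ (htest k)] at hL1
  exact tendsto_nhds_unique hL1 hL2

/-! ### The energy density as a function of the exponent -/

/-- The energy density `t^p / p` as a function of the exponent `p` and the slope `t = |∇u|`. -/
def dens (p t : ℝ) : ℝ := t ^ p / p

/-- The derivative of `dens p t` in the exponent `p`; for `p > 0` it
vanishes at `t = 0`, in accordance with the convention `0 ^ p * log 0 = 0`. -/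
def densDeriv (p t : ℝ) : ℝ := t ^ p / p * Real.log t - t ^ p / p ^ 2

lemma hasDerivAt_dens {p t : ℝ} (hp : 0 < p) (ht : 0 ≤ t) :
    HasDerivAt (fun q => dens q t) (densDeriv p t) p := by
  rcases ht.eq_or_lt with rfl | ht
  · have : (fun q : ℝ => dens q 0) =ᶠ[𝓝 p] fun _ => 0 := by
      filter_upwards [lt_mem_nhds hp] with q hq
      simp [dens, Real.zero_rpow hq.ne']
    have h0 : densDeriv p 0 = 0 := by simp [densDeriv, Real.zero_rpow hp.ne']
    rw [h0]
    exact (hasDerivAt_const p (0 : ℝ)).congr_of_eventuallyEq this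
  · have h := ((hasDerivAt_id p).const_rpow ht).div (hasDerivAt_id p) hp.ne'
    refine h.congr_deriv ?_
    simp only [densDeriv, id]
    field_simp

lemma rpow_le_rpow_of_bounds {p t T q : ℝ} (ht : 0 ≤ t) (htT : t ≤ T) (hT : 1 ≤ T) (hp : 0 ≤ p)
    (hpq : p ≤ q) : t ^ p ≤ T ^ q :=
  (Real.rpow_le_rpow ht htT hp).trans (Real.rpow_le_rpow_of_exponent_le hT hpq)

lemma abs_dens_le {p t T q : ℝ} (ht : 0 ≤ t) (htT : t ≤ T) (hT : 1 ≤ T) (hp : 1 < p)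
    (hpq : p ≤ q) : |dens p t| ≤ T ^ q * T := by
  have h1 := rpow_le_rpow_of_bounds ht htT hT (by linarith) hpq
  have h0 : 0 ≤ t ^ p := Real.rpow_nonneg ht _
  rw [dens, abs_of_nonneg (by positivity)]
  calc t ^ p / p ≤ t ^ p := div_le_self h0 hp.le
    _ ≤ T ^ q := h1
    _ ≤ T ^ q * T := le_mul_of_one_le_right (by positivity) hT

/-- A bound uniform in the slope, including `t → 0`, where `log t` is unbounded. The factor `T` in
`T ^ q * T` bounds the logarithm for `t ≥ 1`. -/
lemma abs_densDeriv_le {p t T q : ℝ} (ht : 0 ≤ t) (htT : t ≤ T) (hT : 1 ≤ T) (hp : 1 < p)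
    (hpq : p ≤ q) : |densDeriv p t| ≤ 2 * (T ^ q * T) := by
  have h1 := rpow_le_rpow_of_bounds ht htT hT (by linarith) hpq
  have h0 : 0 ≤ t ^ p := Real.rpow_nonneg ht _
  have hTq : 1 ≤ T ^ q := Real.one_le_rpow hT (by linarith)
  have h2 : T ^ q ≤ T ^ q * T := le_mul_of_one_le_right (by positivity) hT
  have hlog : |t ^ p * Real.log t| ≤ T ^ q * T := by
    rcases ht.eq_or_lt with rfl | ht'
    · simp; positivity
    rcases le_total t 1 with h | h
    · have h3 := Real.abs_log_mul_self_rpow_lt t p ht' h (by linarith)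
      rw [mul_comm] at h3
      have h4 : 1 / p ≤ 1 := by rw [div_le_one (by linarith)]; exact hp.le
      linarith
    · rw [abs_mul, abs_of_nonneg h0, abs_of_nonneg (Real.log_nonneg h)]
      have := Real.log_le_self ht
      gcongr
      · exact Real.log_nonneg h
      · linarith
  have h5 : |t ^ p / p * Real.log t| ≤ T ^ q * T := by
    rw [div_mul_eq_mul_div, abs_div, abs_of_pos (by linarith : 0 < p)]
    exact (div_le_self (abs_nonneg _) hp.le).trans hlog
  have h6 : |t ^ p / p ^ 2| ≤ T ^ q * T := by
    rw [abs_of_nonneg (by positivity)]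
    exact ((div_le_self h0 (by nlinarith)).trans h1).trans h2
  rw [densDeriv]
  linarith [abs_sub (t ^ p / p * Real.log t) (t ^ p / p ^ 2)]

lemma abs_dens_sub_le {p r t T q : ℝ} (ht : 0 ≤ t) (htT : t ≤ T) (hT : 1 ≤ T) (hp : 1 < p)
    (hpq : p ≤ q) (hr : 1 < r) (hrq : r ≤ q) :
    |dens p t - dens r t| ≤ 2 * (T ^ q * T) * |p - r| := by
  have hd : ∀ x ∈ Ioc 1 q, HasDerivAt (fun q => dens q t) (densDeriv x t) x := fun x hx =>
    hasDerivAt_dens (by linarith [hx.1]) ht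
  exact Convex.norm_image_sub_le_of_norm_deriv_le (s := Ioc 1 q)
    (fun x hx => (hd x hx).differentiableAt)
    (fun x hx => by rw [(hd x hx).deriv]; exact abs_densDeriv_le ht htT hT hx.1 hx.2)
    (convex_Ioc 1 q) ⟨hr, hrq⟩ ⟨hp, hpq⟩

/-! ### Integrability -/

lemma integrable_of_bdd_of_zero_off_compact {n : ℕ} {F : Type*} [NormedAddCommGroup F]
    {f : Euc n → F} {K : Set (Euc n)} (hK : IsCompact K) (hf : AEStronglyMeasurable f) {C : ℝ}
    (hC : ∀ x, ‖f x‖ ≤ C) (h0 : ∀ x ∉ K, f x = 0) : Integrable f := by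
  have h1 : IntegrableOn f K := IntegrableOn.of_bound hK.measure_lt_top hf.restrict C
    (ae_of_all _ hC)
  exact (integrableOn_iff_integrable_of_support_subset
    (fun x hx => by by_contra h; exact hx (h0 x h))).mp h1

lemma norm_gradient {n : ℕ} (f : Euc n → ℝ) (x : Euc n) : ‖gradient f x‖ = ‖fderiv ℝ f x‖ :=
  LinearIsometryEquiv.norm_map _ _

lemma continuous_gradient {n : ℕ} {U : Euc n → ℝ} (hU : ContDiff ℝ 1 U) :
    Continuous (gradient U) :=
  (LinearIsometryEquiv.continuous _).comp (hU.continuous_fderiv one_ne_zero)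

lemma gradient_eq_zero_of_notMem_tsupport {n : ℕ} {U : Euc n → ℝ} {x : Euc n}
    (hx : x ∉ tsupport U) : gradient U x = 0 := by
  rw [← norm_eq_zero, norm_gradient, norm_eq_zero]
  exact fderiv_of_notMem_tsupport ℝ hx

lemma exists_gradient_bound {n : ℕ} {U : Euc n → ℝ} (hU : ContDiff ℝ 1 U)
    (hUc : HasCompactSupport U) : ∃ T, 1 ≤ T ∧ ∀ x, ‖gradient U x‖ ≤ T := by
  obtain ⟨C, hC⟩ := (hUc.fderiv ℝ).exists_bound_of_continuous (hU.continuous_fderiv one_ne_zero)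
  refine ⟨max 1 C, le_max_left _ _, fun x => ?_⟩
  rw [norm_gradient]
  exact (hC x).trans (le_max_right _ _)

section Integrability

variable {n : ℕ} {U P : Euc n → ℝ} {pmax : ℝ}

lemma continuous_dens_comp {X : Type*} [TopologicalSpace X] {p t : X → ℝ} (hp : Continuous p)
    (ht : Continuous t) (h1 : ∀ x, 1 < p x) : Continuous fun x => dens (p x) (t x) :=
  (ht.rpow hp fun x => Or.inr (by linarith [h1 x])).div hp fun x => by linarith [h1 x]

lemma integrable_flux (hU : ContDiff ℝ 1 U) (hUc : HasCompactSupport U) (hP : Continuous P)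
    (hP1 : ∀ x, 1 < P x) (hP2 : ∀ x, P x ≤ pmax) :
    Integrable fun x => ‖gradient U x‖ ^ (P x - 2) • gradient U x := by
  obtain ⟨T, hT, hTU⟩ := exists_gradient_bound hU hUc
  have hm := (continuous_gradient hU).measurable
  refine integrable_of_bdd_of_zero_off_compact (C := T ^ pmax) hUc.isCompact ?_ (fun x => ?_)
    (fun x hx => ?_)
  · exact ((hm.norm.pow (hP.measurable.sub_const 2)).smul hm).aestronglyMeasurable
  · rcases eq_or_ne (gradient U x) 0 with h | h
    · rw [h]; simp; positivity
    · have h' : ‖gradient U x‖ ≠ 0 := norm_ne_zero_iff.mpr h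
      rw [norm_smul, Real.norm_of_nonneg (by positivity), ← Real.rpow_add_one h']
      exact rpow_le_rpow_of_bounds (norm_nonneg _) (hTU x) hT (by linarith [hP1 x])
        (by linarith [hP2 x])
  · rw [gradient_eq_zero_of_notMem_tsupport hx, smul_zero]

lemma integrable_dens (hU : ContDiff ℝ 1 U) (hUc : HasCompactSupport U) (hP : Continuous P)
    (hP1 : ∀ x, 1 < P x) (hP2 : ∀ x, P x ≤ pmax) :
    Integrable fun x => dens (P x) ‖gradient U x‖ := by
  obtain ⟨T, hT, hTU⟩ := exists_gradient_bound hU hUc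
  refine integrable_of_bdd_of_zero_off_compact hUc.isCompact
    (continuous_dens_comp hP (continuous_gradient hU).norm hP1).aestronglyMeasurable
    (fun x => abs_dens_le (norm_nonneg _) (hTU x) hT (hP1 x) (hP2 x)) (fun x hx => ?_)
  rw [gradient_eq_zero_of_notMem_tsupport hx, dens, norm_zero,
    Real.zero_rpow (by linarith [hP1 x]), zero_div]

lemma integrable_densDeriv (hU : ContDiff ℝ 1 U) (hUc : HasCompactSupport U)
    (hP : Continuous P) (hP1 : ∀ x, 1 < P x) (hP2 : ∀ x, P x ≤ pmax) :
    Integrable fun x => densDeriv (P x) ‖gradient U x‖ := by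
  obtain ⟨T, hT, hTU⟩ := exists_gradient_bound hU hUc
  have hm := (continuous_gradient hU).measurable.norm
  refine integrable_of_bdd_of_zero_off_compact hUc.isCompact ?_
    (fun x => abs_densDeriv_le (norm_nonneg _) (hTU x) hT (hP1 x) (hP2 x)) (fun x hx => ?_)
  · have hp := hm.pow hP.measurable
    exact (((hp.div hP.measurable).mul hm.log).sub
      (hp.div (hP.measurable.pow_const 2))).aestronglyMeasurable
  · rw [gradient_eq_zero_of_notMem_tsupport hx, densDeriv, norm_zero,
      Real.zero_rpow (by linarith [hP1 x]), zero_div, zero_div, zero_mul, sub_zero]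

end Integrability

/-! ### The identity for compactly supported functions on the whole space -/

/-- The integrand of the identity in direction `e` with test function `ψ`, for a solution `U` of
`div (|∇U|^(P-2) ∇U) = G`. The last term is the derivative of the energy density through the
exponent. -/
def pohoIntegrand {n : ℕ} (U P G : Euc n → ℝ) (e : Euc n) (ψ : Euc n → ℝ) (x : Euc n) : ℝ :=
  fderiv ℝ U x e * fderiv ℝ ψ x (‖gradient U x‖ ^ (P x - 2) • gradient U x)
    + fderiv ℝ U x e * (G x * ψ x)
    - dens (P x) ‖gradient U x‖ * fderiv ℝ ψ x e
    - densDeriv (P x) ‖gradient U x‖ * fderiv ℝ P x e * ψ x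

section Global

variable {n : ℕ} {U P G : Euc n → ℝ} {pmax : ℝ} {K : NNReal}

lemma integrable_fderiv_apply {A : Euc n → Euc n} (hA : Integrable A) {ψ : Euc n → ℝ}
    (hψ : ContDiff ℝ 1 ψ) (hψc : HasCompactSupport ψ) :
    Integrable fun x => fderiv ℝ ψ x (A x) := by
  have hc := hψ.continuous_fderiv one_ne_zero
  obtain ⟨C, hC⟩ := (hψc.fderiv ℝ).exists_bound_of_continuous hc
  refine (hA.norm.const_mul C).mono' ?_ (ae_of_all _ fun x => ?_)
  · exact (isBoundedBilinearMap_apply (𝕜 := ℝ)).continuous.comp_aestronglyMeasurable₂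
      hc.aestronglyMeasurable hA.aestronglyMeasurable
  · exact (ContinuousLinearMap.le_opNorm _ _).trans (by gcongr; exact hC x)

lemma integrable_mul_of_continuous {f ψ : Euc n → ℝ} (hf : Integrable f) (hψ : Continuous ψ)
    (hψc : HasCompactSupport ψ) : Integrable fun x => f x * ψ x := by
  obtain ⟨C, hC⟩ := hψc.exists_bound_of_continuous hψ
  exact hf.mul_bdd hψ.aestronglyMeasurable (ae_of_all _ hC)

lemma integrable_mul_fderiv {f ψ : Euc n → ℝ} (hf : Integrable f) (hψ : ContDiff ℝ 1 ψ)
    (hψc : HasCompactSupport ψ) (e : Euc n) : Integrable fun x => f x * fderiv ℝ ψ x e :=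
  integrable_mul_of_continuous hf ((hψ.continuous_fderiv one_ne_zero).clm_apply continuous_const)
    (hψc.fderiv_apply ℝ e)

lemma integrable_mul_fderiv_of_lipschitz {f : Euc n → ℝ} (hf : Integrable f)
    (hP : LipschitzWith K P) (e : Euc n) : Integrable fun x => f x * fderiv ℝ P x e := by
  refine hf.mul_bdd (c := K * ‖e‖) (measurable_fderiv_apply_const ℝ P e).aestronglyMeasurable
    (ae_of_all _ fun x => ?_)
  exact (ContinuousLinearMap.le_opNorm _ _).trans
    (by gcongr; exact norm_fderiv_le_of_lipschitz ℝ hP)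

lemma integrable_pohoIntegrand (hU : ContDiff ℝ 1 U) (hUc : HasCompactSupport U)
    (hP : LipschitzWith K P) (hP1 : ∀ x, 1 < P x) (hP2 : ∀ x, P x ≤ pmax) (hG : Integrable G)
    (e : Euc n) {ψ : Euc n → ℝ} (hψ : ContDiff ℝ 1 ψ) (hψc : HasCompactSupport ψ) :
    Integrable (pohoIntegrand U P G e ψ) := by
  have h1 := integrable_fderiv_apply (integrable_flux hU hUc hP.continuous hP1 hP2) hψ hψc
  have h2 := integrable_mul_of_continuous hG hψ.continuous hψc
  have h3 := integrable_mul_fderiv (integrable_dens hU hUc hP.continuous hP1 hP2) hψ hψc e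
  have h4 := integrable_mul_of_continuous (integrable_mul_fderiv_of_lipschitz
    (integrable_densDeriv hU hUc hP.continuous hP1 hP2) hP e) hψ.continuous hψc
  have h1' := integrable_mul_fderiv h1 hU hUc e
  have h2' := integrable_mul_fderiv h2 hU hUc e
  simp_rw [mul_comm _ (fderiv ℝ U _ e)] at h1' h2'
  exact ((h1'.add h2').sub h3).sub h4

/-- The difference quotients of `x ↦ ψ x * dens (P x) t`, taken at `x` with the slope `t` frozen to
`|∇U x|`, converge in the mean. The exponent is differentiable almost everywhere by Rademacher's
theorem. -/
lemma tendsto_integral_dens_quotient (hU : ContDiff ℝ 1 U) (hUc : HasCompactSupport U)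
    (hP : LipschitzWith K P) (hP1 : ∀ x, 1 < P x) (hP2 : ∀ x, P x ≤ pmax)
    (e : Euc n) {ψ : Euc n → ℝ} (hψ : ContDiff ℝ 1 ψ) (hψc : HasCompactSupport ψ) :
    Tendsto (fun t : ℝ => ∫ x, t⁻¹ * (ψ (x - t • e) * dens (P (x - t • e)) ‖gradient U x‖
        - ψ x * dens (P x) ‖gradient U x‖)) (𝓝[>] 0)
      (𝓝 (∫ x, -(dens (P x) ‖gradient U x‖ * fderiv ℝ ψ x e
        + densDeriv (P x) ‖gradient U x‖ * fderiv ℝ P x e * ψ x))) := by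
  obtain ⟨T, hT, hTU⟩ := exists_gradient_bound hU hUc
  obtain ⟨C, hC⟩ := hψc.exists_bound_of_continuous hψ.continuous
  obtain ⟨L, hL⟩ := hψ.lipschitzWith_of_hasCompactSupport hψc one_ne_zero
  have hg := (continuous_gradient hU).norm
  set B := T ^ pmax * T with hB
  set D := L * ‖e‖ * B + C * (2 * B * (K * ‖e‖)) with hD
  have hB0 : 0 ≤ B := by positivity
  have hC0 : 0 ≤ C := (norm_nonneg _).trans (hC 0)
  refine tendsto_integral_filter_of_dominated_convergence
    ((tsupport U).indicator fun _ => D) ?_ ?_ ?_ ?_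
  · refine Eventually.of_forall fun t => Continuous.aestronglyMeasurable ?_
    have hs : Continuous fun x : Euc n => x - t • e := by fun_prop
    have h1 := continuous_dens_comp (hP.continuous.comp hs) hg fun x => hP1 (x - t • e)
    have h2 := continuous_dens_comp hP.continuous hg hP1
    exact continuous_const.mul (((hψ.continuous.comp hs).mul h1).sub (hψ.continuous.mul h2))
  · filter_upwards [self_mem_nhdsWithin] with t ht
    refine ae_of_all _ fun x => ?_
    have ht0 : (0 : ℝ) < t := ht
    by_cases hx : x ∈ tsupport U
    · rw [indicator_of_mem hx]
      have hdist : dist (x - t • e) x = t * ‖e‖ := by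
        rw [dist_eq_norm, sub_sub_cancel_left, norm_neg, norm_smul, Real.norm_of_nonneg ht0.le]
      have e1 : |ψ (x - t • e) - ψ x| ≤ L * (t * ‖e‖) := by
        have := hL.dist_le_mul (x - t • e) x
        rwa [hdist, Real.dist_eq] at this
      have e2 : |P (x - t • e) - P x| ≤ K * (t * ‖e‖) := by
        have := hP.dist_le_mul (x - t • e) x
        rwa [hdist, Real.dist_eq] at this
      have e3 := abs_dens_le (norm_nonneg _) (hTU x) hT (hP1 (x - t • e)) (hP2 (x - t • e))
      have e4 := abs_dens_sub_le (norm_nonneg _) (hTU x) hT (hP1 (x - t • e)) (hP2 (x - t • e))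
        (hP1 x) (hP2 x)
      have e5 : ψ (x - t • e) * dens (P (x - t • e)) ‖gradient U x‖
          - ψ x * dens (P x) ‖gradient U x‖
          = (ψ (x - t • e) - ψ x) * dens (P (x - t • e)) ‖gradient U x‖
            + ψ x * (dens (P (x - t • e)) ‖gradient U x‖ - dens (P x) ‖gradient U x‖) := by ring
      rw [norm_mul, norm_inv, Real.norm_of_nonneg ht0.le, inv_mul_le_iff₀ ht0, e5]
      calc _ ≤ |ψ (x - t • e) - ψ x| * |dens (P (x - t • e)) ‖gradient U x‖|
            + ‖ψ x‖ * |dens (P (x - t • e)) ‖gradient U x‖ - dens (P x) ‖gradient U x‖| := by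
            refine (norm_add_le _ _).trans (le_of_eq ?_)
            rw [norm_mul, norm_mul]; rfl
        _ ≤ L * (t * ‖e‖) * B + C * (2 * B * (K * (t * ‖e‖))) := by
            gcongr
            · exact hC x
            · exact e4.trans (by gcongr)
        _ = t * D := by rw [hD]; ring
    · rw [indicator_of_notMem hx]
      have hz : ∀ y, dens (P y) ‖gradient U x‖ = 0 := fun y => by
        rw [gradient_eq_zero_of_notMem_tsupport hx, dens, norm_zero,
          Real.zero_rpow (by linarith [hP1 y]), zero_div]
      simp [hz]
  · exact (integrable_indicator_iff (isClosed_tsupport U).measurableSet).mpr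
      (integrableOn_const hUc.isCompact.measure_lt_top.ne)
  · filter_upwards [hP.ae_differentiableAt (μ := volume)] with x hx
    have h1 : HasFDerivAt ψ (fderiv ℝ ψ x) x := (hψ.differentiable one_ne_zero x).hasFDerivAt
    have h2 : HasFDerivAt (fun y => dens (P y) ‖gradient U x‖)
        (densDeriv (P x) ‖gradient U x‖ • fderiv ℝ P x) x :=
      (hasDerivAt_dens (by linarith [hP1 x]) (norm_nonneg _)).comp_hasFDerivAt x hx.hasFDerivAt
    have h3 := ((h1.mul h2).hasLineDerivAt (-e)).tendsto_slope_zero_right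
    simp only [smul_neg, ← sub_eq_add_neg, smul_eq_mul] at h3
    have h4 : -(dens (P x) ‖gradient U x‖ * fderiv ℝ ψ x e
        + densDeriv (P x) ‖gradient U x‖ * fderiv ℝ P x e * ψ x)
        = (ψ x • densDeriv (P x) ‖gradient U x‖ • fderiv ℝ P x
          + dens (P x) ‖gradient U x‖ • fderiv ℝ ψ x) (-e) := by
      simp
      ring
    rw [h4]
    exact h3

/-- One half of the identity, for nonnegative test functions. The equation is tested with
`ψ * (U(x + t e) - U x) / t`, which needs no second derivatives of `U`, and the difference of
gradients is estimated by convexity of the energy density before `t → 0+`. -/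
lemma integral_pohoIntegrand_nonneg (hU : ContDiff ℝ 1 U) (hUc : HasCompactSupport U)
    (hP : LipschitzWith K P) (hP1 : ∀ x, 1 < P x) (hP2 : ∀ x, P x ≤ pmax) (hG : Integrable G)
    {W : Set (Euc n)} (hW : IsOpen W)
    (h : ∀ φ, IsTest W φ →
      ∫ x, fderiv ℝ φ x (‖gradient U x‖ ^ (P x - 2) • gradient U x) = - ∫ x, G x * φ x)
    (e : Euc n) {ψ : Euc n → ℝ} (hψ : ContDiff ℝ 1 ψ) (hψc : HasCompactSupport ψ)
    (hψW : tsupport ψ ⊆ W) (hψ0 : ∀ x, 0 ≤ ψ x) :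
    0 ≤ ∫ x, pohoIntegrand U P G e ψ x := by
  set A : Euc n → Euc n := fun x => ‖gradient U x‖ ^ (P x - 2) • gradient U x with hAdef
  have hA : Integrable A := integrable_flux hU hUc hP.continuous hP1 hP2
  obtain ⟨L, hL⟩ := hU.lipschitzWith_of_hasCompactSupport hUc one_ne_zero
  have hg := (continuous_gradient hU).norm
  have hAψ := integrable_fderiv_apply hA hψ hψc
  have hGψ := integrable_mul_of_continuous hG hψ.continuous hψc
  have hdU := hU.differentiable one_ne_zero
  have hdψ := hψ.differentiable one_ne_zero
  have hineq : ∀ t : ℝ, 0 < t →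
      - ∫ x, t⁻¹ • (U (x + t • e) - U x) * (G x * ψ x) ≤
        (∫ x, t⁻¹ • (U (x + t • e) - U x) * fderiv ℝ ψ x (A x))
        + ∫ x, t⁻¹ * (ψ (x - t • e) * dens (P (x - t • e)) ‖gradient U x‖
          - ψ x * dens (P x) ‖gradient U x‖) := by
    intro t ht
    have hsh : ContDiff ℝ 1 fun x : Euc n => x + t • e := contDiff_id.add contDiff_const
    have hq : ContDiff ℝ 1 fun x => t⁻¹ • (U (x + t • e) - U x) :=
      ((hU.comp hsh).sub hU).const_smul t⁻¹
    set φ : Euc n → ℝ := fun x => (t⁻¹ • (U (x + t • e) - U x)) * ψ x with hφ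
    have hφ1 : ContDiff ℝ 1 φ := hq.mul hψ
    have hφc : HasCompactSupport φ := hψc.mul_left
    have hφW : tsupport φ ⊆ W := (tsupport_mul_subset_right).trans hψW
    have hw := weak_eq_of_contDiff_one hA hG hW h hφ1 hφc hφW
    have hd : ∀ x v, fderiv ℝ φ x v = t⁻¹ • (U (x + t • e) - U x) * fderiv ℝ ψ x v
        + ψ x * (t⁻¹ * (fderiv ℝ U (x + t • e) v - fderiv ℝ U x v)) := by
      intro x v
      have h1 : HasFDerivAt (fun x => U (x + t • e)) (fderiv ℝ U (x + t • e)) x :=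
        (hasFDerivAt_comp_add_right _).mpr (hdU (x + t • e)).hasFDerivAt
      have h2 := ((h1.sub (hdU x).hasFDerivAt).const_smul t⁻¹).mul (hdψ x).hasFDerivAt
      have h3 : fderiv ℝ φ x = _ := h2.fderiv
      rw [h3]
      simp
    have hc1 : Continuous fun x => ψ x * dens (P x) ‖gradient U (x + t • e)‖ :=
      hψ.continuous.mul (continuous_dens_comp hP.continuous (hg.comp hsh.continuous) hP1)
    have hc2 : Continuous fun x => ψ x * dens (P x) ‖gradient U x‖ :=
      hψ.continuous.mul (continuous_dens_comp hP.continuous hg hP1)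
    have hi1 := hc1.integrable_of_hasCompactSupport (μ := volume) hψc.mul_right
    have hi2 := hc2.integrable_of_hasCompactSupport (μ := volume) hψc.mul_right
    have hi3 : Integrable fun x => t⁻¹ • (U (x + t • e) - U x) * fderiv ℝ ψ x (A x) := by
      refine hAψ.bdd_mul (c := t⁻¹ * (L * (t * ‖e‖))) hq.continuous.aestronglyMeasurable
        (ae_of_all _ fun x => ?_)
      rw [norm_smul, norm_inv, Real.norm_of_nonneg ht.le]
      gcongr
      have := hL.dist_le_mul (x + t • e) x
      rwa [dist_eq_norm, dist_eq_norm, add_sub_cancel_left, norm_smul,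
        Real.norm_of_nonneg ht.le] at this
    -- The translation moves the increment from the gradient to `ψ` and the exponent.
    have hshift : ∫ x, ψ x * dens (P x) ‖gradient U (x + t • e)‖
        = ∫ x, ψ (x - t • e) * dens (P (x - t • e)) ‖gradient U x‖ := by
      rw [← integral_sub_right_eq_self (fun x => ψ x * dens (P x) ‖gradient U (x + t • e)‖) (t • e)]
      simp
    have hi1' : Integrable fun x => ψ (x - t • e) * dens (P (x - t • e)) ‖gradient U x‖ := by
      simpa using hi1.comp_sub_right (t • e)
    have hle : ∫ x, fderiv ℝ φ x (A x) ≤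
        ∫ x, (t⁻¹ • (U (x + t • e) - U x) * fderiv ℝ ψ x (A x)
          + t⁻¹ * (ψ x * dens (P x) ‖gradient U (x + t • e)‖
            - ψ x * dens (P x) ‖gradient U x‖)) := by
      refine integral_mono (integrable_fderiv_apply hA hφ1 hφc)
        (hi3.add ((hi1.sub hi2).const_mul _)) fun x => ?_
      have hcv := rpow_norm_tangent_le (gradient U x) (gradient U (x + t • e)) (hP1 x)
      have h1 : fderiv ℝ U (x + t • e) (A x) - fderiv ℝ U x (A x)
          = ‖gradient U x‖ ^ (P x - 2) * ⟪gradient U x, gradient U (x + t • e) - gradient U x⟫ := by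
        rw [← inner_gradient_left, ← inner_gradient_left, ← inner_sub_left, hAdef,
          real_inner_smul_right, real_inner_comm]
      simp only [hd, h1]
      rw [← mul_sub, mul_left_comm]
      gcongr
      · exact hψ0 x
      · exact hcv
    have hi4 : Integrable fun x => t⁻¹ * (ψ x * dens (P x) ‖gradient U (x + t • e)‖
        - ψ x * dens (P x) ‖gradient U x‖) := (hi1.sub hi2).const_mul _
    rw [integral_add hi3 hi4, integral_const_mul, integral_sub hi1 hi2,
      hshift, ← integral_sub hi1' hi2, ← integral_const_mul, hw] at hle
    have h4 : ∫ x, G x * φ x = ∫ x, t⁻¹ • (U (x + t • e) - U x) * (G x * ψ x) := by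
      congr 1; ext x; simp only [hφ]; ring
    rwa [h4] at hle
  have hl1 := (hL.integral_inv_smul_sub_mul_tendsto_integral_lineDeriv_mul hGψ e).neg
  have hl2 := (hL.integral_inv_smul_sub_mul_tendsto_integral_lineDeriv_mul hAψ e).add
    (tendsto_integral_dens_quotient hU hUc hP hP1 hP2 e hψ hψc)
  have hle := le_of_tendsto_of_tendsto hl1 hl2
    (by filter_upwards [self_mem_nhdsWithin] with t ht using hineq t ht)
  simp_rw [fun x => (hdU x).lineDeriv_eq_fderiv (v := e)] at hle
  have h1' := integrable_mul_fderiv hAψ hU hUc e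
  have h2' := integrable_mul_fderiv hGψ hU hUc e
  simp_rw [mul_comm _ (fderiv ℝ U _ e)] at h1' h2'
  have h3' : Integrable fun x => -(dens (P x) ‖gradient U x‖ * fderiv ℝ ψ x e
        + densDeriv (P x) ‖gradient U x‖ * fderiv ℝ P x e * ψ x) :=
    ((integrable_mul_fderiv (integrable_dens hU hUc hP.continuous hP1 hP2) hψ hψc e).add
      (integrable_mul_of_continuous (integrable_mul_fderiv_of_lipschitz
        (integrable_densDeriv hU hUc hP.continuous hP1 hP2) hP e) hψ.continuous hψc)).neg
  have h12 : Integrable fun x => fderiv ℝ U x e * fderiv ℝ ψ x (A x)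
      + fderiv ℝ U x e * (G x * ψ x) := h1'.add h2'
  have hsum : ∫ x, pohoIntegrand U P G e ψ x
      = (∫ x, fderiv ℝ U x e * fderiv ℝ ψ x (A x)) + (∫ x, fderiv ℝ U x e * (G x * ψ x))
        + ∫ x, -(dens (P x) ‖gradient U x‖ * fderiv ℝ ψ x e
        + densDeriv (P x) ‖gradient U x‖ * fderiv ℝ P x e * ψ x) := by
    rw [← integral_add h1' h2', ← integral_add h12 h3']
    congr 1; ext x
    simp only [pohoIntegrand, hAdef]
    ring
  rw [hsum]
  linarith

lemma integral_pohoIntegrand_eq_zero_of_nonneg (hU : ContDiff ℝ 1 U) (hUc : HasCompactSupport U)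
    (hP : LipschitzWith K P) (hP1 : ∀ x, 1 < P x) (hP2 : ∀ x, P x ≤ pmax) (hG : Integrable G)
    {W : Set (Euc n)} (hW : IsOpen W)
    (h : ∀ φ, IsTest W φ →
      ∫ x, fderiv ℝ φ x (‖gradient U x‖ ^ (P x - 2) • gradient U x) = - ∫ x, G x * φ x)
    (e : Euc n) {ψ : Euc n → ℝ} (hψ : ContDiff ℝ 1 ψ) (hψc : HasCompactSupport ψ)
    (hψW : tsupport ψ ⊆ W) (hψ0 : ∀ x, 0 ≤ ψ x) :
    ∫ x, pohoIntegrand U P G e ψ x = 0 := by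
  -- Replacing `e` by `-e` changes the sign of the integrand, so both inequalities hold.
  have h1 := integral_pohoIntegrand_nonneg hU hUc hP hP1 hP2 hG hW h e hψ hψc hψW hψ0
  have h2 := integral_pohoIntegrand_nonneg hU hUc hP hP1 hP2 hG hW h (-e) hψ hψc hψW hψ0
  have h3 : ∀ x, pohoIntegrand U P G (-e) ψ x = - pohoIntegrand U P G e ψ x := fun x => by
    simp only [pohoIntegrand, map_neg]; ring
  simp_rw [h3, integral_neg] at h2
  linarith

/-- The identity for arbitrary test functions: `ψ` is the difference of the nonnegative functions
`ψ + C χ` and `C χ`, where `χ` is a cutoff function equal to `1` on the support of `ψ`. -/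
lemma integral_pohoIntegrand_eq_zero (hU : ContDiff ℝ 1 U) (hUc : HasCompactSupport U)
    (hP : LipschitzWith K P) (hP1 : ∀ x, 1 < P x) (hP2 : ∀ x, P x ≤ pmax) (hG : Integrable G)
    {W : Set (Euc n)} (hW : IsOpen W)
    (h : ∀ φ, IsTest W φ →
      ∫ x, fderiv ℝ φ x (‖gradient U x‖ ^ (P x - 2) • gradient U x) = - ∫ x, G x * φ x)
    (e : Euc n) {ψ : Euc n → ℝ} (hψ : IsTest W ψ) :
    ∫ x, pohoIntegrand U P G e ψ x = 0 := by
  obtain ⟨hψs, hψc, hψW⟩ := hψ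
  obtain ⟨χ, ⟨hχs, hχc, hχW⟩, hχ0, V, hV, hKV, hVW, hV1⟩ := exists_cutoff hW hψc.isCompact hψW
  obtain ⟨C, hC⟩ := hψc.exists_bound_of_continuous hψs.continuous
  have hC0 : 0 ≤ C := (norm_nonneg _).trans (hC 0)
  have hle1 : (1 : WithTop ℕ∞) ≤ ((⊤ : ℕ∞) : WithTop ℕ∞) := by exact_mod_cast le_top
  have hψ1 := hψs.of_le hle1
  have hχ1 := hχs.of_le hle1
  have h1 : ContDiff ℝ 1 fun x => C * χ x := contDiff_const.mul hχ1
  have h1c : HasCompactSupport fun x => C * χ x := hχc.mul_left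
  have h1W : tsupport (fun x => C * χ x) ⊆ W := tsupport_mul_subset_right.trans hχW
  have h2 : ContDiff ℝ 1 fun x => ψ x + C * χ x := hψ1.add h1
  have h2c : HasCompactSupport fun x => ψ x + C * χ x := hψc.add h1c
  have h2W : tsupport (fun x => ψ x + C * χ x) ⊆ W :=
    (tsupport_add _ _).trans (union_subset hψW h1W)
  have h20 : ∀ x, 0 ≤ ψ x + C * χ x := fun x => by
    by_cases hx : x ∈ tsupport ψ
    · rw [hV1 x (hKV hx)]
      have := neg_le_of_abs_le (hC x)
      linarith
    · rw [image_eq_zero_of_notMem_tsupport hx, zero_add]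
      exact mul_nonneg hC0 (hχ0 x)
  have e1 := integral_pohoIntegrand_eq_zero_of_nonneg hU hUc hP hP1 hP2 hG hW h e h1 h1c h1W
    fun x => mul_nonneg hC0 (hχ0 x)
  have e2 := integral_pohoIntegrand_eq_zero_of_nonneg hU hUc hP hP1 hP2 hG hW h e h2 h2c h2W h20
  have hsub : ∀ x, pohoIntegrand U P G e ψ x = pohoIntegrand U P G e (fun x => ψ x + C * χ x) x
      - pohoIntegrand U P G e (fun x => C * χ x) x := fun x => by
    have : fderiv ℝ (fun x => ψ x + C * χ x) x = fderiv ℝ ψ x + fderiv ℝ (fun x => C * χ x) x :=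
      fderiv_fun_add (hψ1.differentiable one_ne_zero x) (h1.differentiable one_ne_zero x)
    simp only [pohoIntegrand, this, add_apply]
    ring
  simp_rw [hsub]
  rw [integral_sub (integrable_pohoIntegrand hU hUc hP hP1 hP2 hG e h2 h2c)
    (integrable_pohoIntegrand hU hUc hP hP1 hP2 hG e h1 h1c), e1, e2, sub_zero]

end Global

/-! ### Localization and the reaction term -/

section Reduction

lemma gradient_of_notMem_tsupport {n : ℕ} {ψ : Euc n → ℝ} {x : Euc n} (hx : x ∉ tsupport ψ) :
    ψ x = 0 ∧ fderiv ℝ ψ x = 0 ∧ gradient ψ x = 0 :=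
  ⟨image_eq_zero_of_notMem_tsupport hx, fderiv_of_notMem_tsupport ℝ hx,
    gradient_eq_zero_of_notMem_tsupport hx⟩

/-- Replaces an integral over `Ω` by one over the whole space when both integrands vanish off
`S ⊆ Ω` and agree on `S`. -/
lemma setIntegral_eq_integral_of_eqOn {n : ℕ} {Ω S : Set (Euc n)} (hS : S ⊆ Ω) {f g : Euc n → ℝ}
    (h : ∀ x ∈ S, f x = g x) (hf : ∀ x ∉ S, f x = 0) (hg : ∀ x ∉ S, g x = 0) :
    ∫ x in Ω, f x = ∫ x, g x := by
  rw [setIntegral_eq_integral_of_forall_compl_eq_zero fun x hx => hf x fun h' => hx (hS h')]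
  congr 1
  ext x
  by_cases hx : x ∈ S
  · exact h x hx
  · rw [hf x hx, hg x hx]

/-- The exponent extends from `Ω` to the whole space with the same Lipschitz constant and bounds:
a Lipschitz extension is truncated at `pmin` and `pmax`. -/
lemma exists_global_exponent {n : ℕ} {Ω : Set (Euc n)} {pe : Euc n → ℝ} {pmin pmax : ℝ}
    (hp : pmin ≤ pmax) (hpe : ∀ x ∈ Ω, pmin ≤ pe x ∧ pe x ≤ pmax) {K : NNReal}
    (hpl : LipschitzOnWith K pe Ω) :
    ∃ P : Euc n → ℝ, LipschitzWith K P ∧ (∀ x, pmin ≤ P x) ∧ (∀ x, P x ≤ pmax) ∧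
      ∀ x ∈ Ω, P x = pe x := by
  obtain ⟨g, hg, hgE⟩ := hpl.extend_real
  refine ⟨fun x => max pmin (min pmax (g x)), (hg.const_min pmax).const_max pmin,
    fun x => le_max_left _ _, fun x => max_le hp (min_le_left _ _), fun x hx => ?_⟩
  have := hpe x hx
  simp only [← hgE hx]
  rw [min_eq_right this.2, max_eq_right this.1]

lemma continuous_betaEps {β : ℝ → ℝ} {M : ℝ} (hβ : IsBeta β M) (ε : ℝ) :
    Continuous (betaEps β ε) := by
  obtain ⟨K, hK⟩ := hβ.lipschitz
  exact continuous_const.mul (hK.continuous.comp (continuous_id.div_const ε))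

/-- Integration by parts in the reaction term, whose primitive along `U` is `Bfun β ε ∘ U`. -/
lemma integral_Bfun_mul_fderiv {n : ℕ} {β : ℝ → ℝ} {M : ℝ} (hβ : IsBeta β M) (ε : ℝ)
    {U ψ : Euc n → ℝ} (hU : ContDiff ℝ 1 U) (hψ : ContDiff ℝ 1 ψ) (hψc : HasCompactSupport ψ)
    (e : Euc n) :
    ∫ x, Bfun β ε (U x) * fderiv ℝ ψ x e = - ∫ x, betaEps β ε (U x) * fderiv ℝ U x e * ψ x := by
  have hb := continuous_betaEps hβ ε
  have hdU := hU.differentiable one_ne_zero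
  have hB : ∀ s, HasDerivAt (Bfun β ε) (betaEps β ε s) s := fun s =>
    (hb.integral_hasStrictDerivAt 0 s).hasDerivAt
  have hd : ∀ x, HasFDerivAt (fun x => Bfun β ε (U x)) (betaEps β ε (U x) • fderiv ℝ U x) x :=
    fun x => (hB (U x)).comp_hasFDerivAt x (hdU x).hasFDerivAt
  have hBc : Continuous fun x => Bfun β ε (U x) :=
    continuous_iff_continuousAt.mpr fun x => (hd x).continuousAt
  have hdc : Continuous fun x => betaEps β ε (U x) * fderiv ℝ U x e :=
    (hb.comp hU.continuous).mul ((hU.continuous_fderiv one_ne_zero).clm_apply continuous_const)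
  have he : ∀ x, fderiv ℝ (fun x => Bfun β ε (U x)) x e = betaEps β ε (U x) * fderiv ℝ U x e :=
    fun x => by rw [(hd x).fderiv]; simp
  simp_rw [← he] at hdc ⊢
  refine integral_mul_fderiv_eq_neg_fderiv_mul_of_integrable ?_ ?_ ?_
    (fun x _ => (hd x).differentiableAt) (fun x _ => hψ.differentiable one_ne_zero x)
  · exact (hdc.mul hψ.continuous).integrable_of_hasCompactSupport hψc.mul_left
  · exact (hBc.mul ((hψ.continuous_fderiv one_ne_zero).clm_apply continuous_const)
      ).integrable_of_hasCompactSupport (hψc.fderiv_apply ℝ e).mul_left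
  · exact (hBc.mul hψ.continuous).integrable_of_hasCompactSupport hψc.mul_left

end Reduction

/-- The Pohozaev-type identity (4.2) for solutions of `P_ε(f^ε, p_ε)`. -/
theorem pohozaev_identity
    (N : ℕ) (Ω : Set (Euc (N + 1))) (hΩ : IsOpen Ω) (hΩc : IsConnected Ω)
    (pmin pmax M : ℝ) (β : ℝ → ℝ) (hβ : IsBeta β M)
    (hp1 : 1 < pmin) (hp2 : pmin ≤ pmax)
    (pe fe ue : Euc (N + 1) → ℝ) (ε : ℝ) (hε : 0 < ε)
    (hpe : ∀ x ∈ Ω, pmin ≤ pe x ∧ pe x ≤ pmax)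
    (hpl : ∃ K : NNReal, LipschitzOnWith K pe Ω)
    (hfm : Measurable fe) (hfb : ∃ C : ℝ, ∀ x ∈ Ω, |fe x| ≤ C)
    (hsol : IsSolPe Ω β ε pe fe ue)
    (hgrad : ∀ K : Set (Euc (N + 1)), IsCompact K → K ⊆ Ω →
      ∃ C : ℝ, ∀ x ∈ K, ‖gradient ue x‖ ≤ C) :
    ∀ ψ : Euc (N + 1) → ℝ, IsTest Ω ψ →
      (- ∫ x in Ω, (‖gradient ue x‖ ^ pe x / pe x) * ⟪gradient ψ x, e1 N⟫)
        + (∫ x in Ω, ‖gradient ue x‖ ^ (pe x - 2) *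
            ⟪gradient ue x, gradient ψ x⟫ * ⟪gradient ue x, e1 N⟫)
        + (∫ x in Ω, fe x * ⟪gradient ue x, e1 N⟫ * ψ x)
      = (∫ x in Ω, (‖gradient ue x‖ ^ pe x / pe x) * Real.log ‖gradient ue x‖ *
            ⟪gradient pe x, e1 N⟫ * ψ x)
        - (∫ x in Ω, (‖gradient ue x‖ ^ pe x / pe x ^ 2) * ⟪gradient pe x, e1 N⟫ * ψ x)
        + (∫ x in Ω, Bfun β ε (ue x) * ⟪gradient ψ x, e1 N⟫) := by
  rintro ψ ⟨hψs, hψc, hψΩ⟩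
  obtain ⟨K, hpl⟩ := hpl
  obtain ⟨Cf, hCf⟩ := hfb
  obtain ⟨-, hu, hweak⟩ := hsol
  set e := e1 N
  have hψ1 : ContDiff ℝ 1 ψ := hψs.of_le (by exact_mod_cast le_top)
  obtain ⟨χ, ⟨hχs, hχc, hχΩ⟩, -, W, hW, hψW, hWΩ, hχ1⟩ := exists_cutoff hΩ hψc.isCompact hψΩ
  obtain ⟨P, hP, hPmin, hPmax, hPe⟩ := exists_global_exponent hp2 hpe hpl
  have hP1 : ∀ x, 1 < P x := fun x => hp1.trans_le (hPmin x)
  -- A globally defined compactly supported function which agrees with `ue` on `W`.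
  set U : Euc (N + 1) → ℝ := fun x => χ x * ue x with hUdef
  have hUt : tsupport U ⊆ tsupport χ := tsupport_mul_subset_left
  have hUc : HasCompactSupport U := hχc.mul_right
  have hU : ContDiff ℝ 1 U := by
    refine contDiff_iff_contDiffAt.mpr fun x => ?_
    by_cases hx : x ∈ tsupport χ
    · exact (hχs.of_le (by exact_mod_cast le_top)).contDiffAt.mul
        (hu.contDiffAt (hΩ.mem_nhds (hχΩ hx)))
    · exact (contDiffAt_const (c := (0 : ℝ))).congr_of_eventuallyEq
        (notMem_tsupport_iff_eventuallyEq.mp fun h => hx (hUt h))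
  have hUW : ∀ x ∈ W, U x = ue x := fun x hx => by simp [hUdef, hχ1 x hx]
  have hUg : ∀ x ∈ W, gradient U x = gradient ue x := fun x hx =>
    Filter.EventuallyEq.gradient_eq (eventually_of_mem (hW.mem_nhds hx) hUW)
  have hPg : ∀ x ∈ W, gradient P x = gradient pe x := fun x hx =>
    Filter.EventuallyEq.gradient_eq (eventually_of_mem (hΩ.mem_nhds (hWΩ hx)) hPe)
  -- `fe` is bounded only on `Ω`, which may have infinite measure: cutting the right-hand side off
  -- to a compact subset of `Ω` makes it integrable.
  set G : Euc (N + 1) → ℝ := (tsupport χ).indicator fun x => betaEps β ε (U x) + fe x with hGdef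
  have hb := continuous_betaEps hβ ε
  have hG : Integrable G := by
    refine (integrable_indicator_iff (isClosed_tsupport χ).measurableSet).mpr ?_
    refine ((hb.comp hU.continuous).continuousOn.integrableOn_compact hχc.isCompact).add ?_
    refine IntegrableOn.of_bound hχc.isCompact.measure_lt_top hfm.aestronglyMeasurable Cf ?_
    filter_upwards [ae_restrict_mem (isClosed_tsupport χ).measurableSet] with x hx
    exact hCf x (hχΩ hx)
  have hGW : ∀ x ∈ W, G x = betaEps β ε (U x) + fe x := fun x hx =>
    indicator_of_mem (subset_tsupport χ (by simp [hχ1 x hx])) _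
  have hw : ∀ φ, IsTest W φ →
      ∫ x, fderiv ℝ φ x (‖gradient U x‖ ^ (P x - 2) • gradient U x) = - ∫ x, G x * φ x := by
    rintro φ ⟨hφs, hφc, hφW⟩
    have h := hweak φ ⟨hφs, hφc, hφW.trans hWΩ⟩
    rw [setIntegral_eq_integral_of_eqOn (hφW.trans hWΩ) (S := tsupport φ)
        (g := fun x => fderiv ℝ φ x (‖gradient U x‖ ^ (P x - 2) • gradient U x)),
      setIntegral_eq_integral_of_eqOn (hφW.trans hWΩ) (S := tsupport φ)
        (g := fun x => G x * φ x)] at h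
    · exact h
    · intro x hx
      rw [hGW x (hφW hx), hUW x (hφW hx)]
    · intro x hx
      rw [(gradient_of_notMem_tsupport hx).1, mul_zero]
    · intro x hx
      rw [(gradient_of_notMem_tsupport hx).1, mul_zero]
    · intro x hx
      rw [hUg x (hφW hx), hPe x (hWΩ (hφW hx)), map_smul, smul_eq_mul, ← inner_gradient_left,
        real_inner_comm]
    · intro x hx
      rw [(gradient_of_notMem_tsupport hx).2.2, inner_zero_right, mul_zero]
    · intro x hx
      rw [(gradient_of_notMem_tsupport hx).2.1, zero_apply]
  have hmain := integral_pohoIntegrand_eq_zero hU hUc hP hP1 hPmax hG hW hw e ⟨hψs, hψc, hψW⟩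
  -- The six integrals of the statement, rewritten over the whole space.
  have E1 : ∫ x in Ω, (‖gradient ue x‖ ^ pe x / pe x) * ⟪gradient ψ x, e⟫
      = ∫ x, dens (P x) ‖gradient U x‖ * fderiv ℝ ψ x e := by
    refine setIntegral_eq_integral_of_eqOn hψΩ (fun x hx => ?_) (fun x hx => ?_) (fun x hx => ?_)
    · rw [hUg x (hψW hx), hPe x (hψΩ hx), dens, inner_gradient_left]
    · simp [gradient_of_notMem_tsupport hx]
    · simp [gradient_of_notMem_tsupport hx]
  have E2 : ∫ x in Ω, ‖gradient ue x‖ ^ (pe x - 2) * ⟪gradient ue x, gradient ψ x⟫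
        * ⟪gradient ue x, e⟫
      = ∫ x, fderiv ℝ U x e * fderiv ℝ ψ x (‖gradient U x‖ ^ (P x - 2) • gradient U x) := by
    refine setIntegral_eq_integral_of_eqOn hψΩ (fun x hx => ?_) (fun x hx => ?_) (fun x hx => ?_)
    · rw [← inner_gradient_left (f := U), hUg x (hψW hx), hPe x (hψΩ hx), map_smul, smul_eq_mul,
        ← inner_gradient_left, real_inner_comm]
      ring
    · simp [gradient_of_notMem_tsupport hx]
    · simp [gradient_of_notMem_tsupport hx]
  have E3 : ∫ x in Ω, fe x * ⟪gradient ue x, e⟫ * ψ x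
      = ∫ x, fe x * fderiv ℝ U x e * ψ x := by
    refine setIntegral_eq_integral_of_eqOn hψΩ (fun x hx => ?_) (fun x hx => ?_) (fun x hx => ?_)
    · rw [← inner_gradient_left (f := U), hUg x (hψW hx)]
    · simp [gradient_of_notMem_tsupport hx]
    · simp [gradient_of_notMem_tsupport hx]
  have E4 : ∫ x in Ω, (‖gradient ue x‖ ^ pe x / pe x) * Real.log ‖gradient ue x‖ *
        ⟪gradient pe x, e⟫ * ψ x
      = ∫ x, ‖gradient U x‖ ^ P x / P x * Real.log ‖gradient U x‖ * fderiv ℝ P x e * ψ x := by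
    refine setIntegral_eq_integral_of_eqOn hψΩ (fun x hx => ?_) (fun x hx => ?_) (fun x hx => ?_)
    · rw [← inner_gradient_left (f := P), hUg x (hψW hx), hPg x (hψW hx), hPe x (hψΩ hx)]
    · simp [gradient_of_notMem_tsupport hx]
    · simp [gradient_of_notMem_tsupport hx]
  have E5 : ∫ x in Ω, (‖gradient ue x‖ ^ pe x / pe x ^ 2) * ⟪gradient pe x, e⟫ * ψ x
      = ∫ x, ‖gradient U x‖ ^ P x / P x ^ 2 * fderiv ℝ P x e * ψ x := by
    refine setIntegral_eq_integral_of_eqOn hψΩ (fun x hx => ?_) (fun x hx => ?_) (fun x hx => ?_)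
    · rw [← inner_gradient_left (f := P), hUg x (hψW hx), hPg x (hψW hx), hPe x (hψΩ hx)]
    · simp [gradient_of_notMem_tsupport hx]
    · simp [gradient_of_notMem_tsupport hx]
  have E6 : ∫ x in Ω, Bfun β ε (ue x) * ⟪gradient ψ x, e⟫
      = ∫ x, Bfun β ε (U x) * fderiv ℝ ψ x e := by
    refine setIntegral_eq_integral_of_eqOn hψΩ (fun x hx => ?_) (fun x hx => ?_) (fun x hx => ?_)
    · rw [hUW x (hψW hx), inner_gradient_left]
    · simp [gradient_of_notMem_tsupport hx]
    · simp [gradient_of_notMem_tsupport hx]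
  rw [E1, E2, E3, E4, E5, E6, integral_Bfun_mul_fderiv hβ ε hU hψ1 hψc e]
  have hPc := hP.continuous
  have I1 := integrable_mul_fderiv (integrable_dens hU hUc hPc hP1 hPmax) hψ1 hψc e
  have I2 : Integrable fun x =>
      fderiv ℝ U x e * fderiv ℝ ψ x (‖gradient U x‖ ^ (P x - 2) • gradient U x) := by
    simp_rw [mul_comm (fderiv ℝ U _ e)]
    exact integrable_mul_fderiv
      (integrable_fderiv_apply (integrable_flux hU hUc hPc hP1 hPmax) hψ1 hψc) hU hUc e
  have Ib : Integrable fun x => betaEps β ε (U x) * fderiv ℝ U x e * ψ x :=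
    (((hb.comp hU.continuous).mul ((hU.continuous_fderiv one_ne_zero).clm_apply
      continuous_const)).mul hψ1.continuous).integrable_of_hasCompactSupport hψc.mul_left
  have hGψ : ∀ x, G x * ψ x = (betaEps β ε (U x) + fe x) * ψ x := fun x => by
    by_cases hx : x ∈ tsupport ψ
    · rw [hGW x (hψW hx)]
    · simp [gradient_of_notMem_tsupport hx]
  have I3 : Integrable fun x => fe x * fderiv ℝ U x e * ψ x := by
    refine ((integrable_mul_fderiv (integrable_mul_of_continuous hG hψ1.continuous hψc)
      hU hUc e).sub Ib).congr (ae_of_all _ fun x => ?_)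
    simp only [Pi.sub_apply, hGψ]
    ring
  have I5 : Integrable fun x => ‖gradient U x‖ ^ P x / P x ^ 2 * fderiv ℝ P x e * ψ x := by
    refine integrable_mul_of_continuous (integrable_mul_fderiv_of_lipschitz ?_ hP e)
      hψ1.continuous hψc
    refine ((integrable_dens hU hUc hPc hP1 hPmax).mul_bdd (c := 1)
      hPc.measurable.inv.aestronglyMeasurable (ae_of_all _ fun x => ?_)).congr
      (ae_of_all _ fun x => ?_)
    · have := hP1 x
      rw [Pi.inv_apply, Real.norm_of_nonneg (inv_nonneg.mpr (by linarith))]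
      exact inv_le_one_of_one_le₀ this.le
    · simp only [dens, Pi.inv_apply]
      have : P x ≠ 0 := by linarith [hP1 x]
      field_simp
  have I4 : Integrable fun x =>
      ‖gradient U x‖ ^ P x / P x * Real.log ‖gradient U x‖ * fderiv ℝ P x e * ψ x := by
    refine ((integrable_mul_of_continuous (integrable_mul_fderiv_of_lipschitz
      (integrable_densDeriv hU hUc hPc hP1 hPmax) hP e) hψ1.continuous hψc).add I5).congr
      (ae_of_all _ fun x => ?_)
    simp only [Pi.add_apply, densDeriv]
    ring
  have hsum : ∫ x, pohoIntegrand U P G e ψ x = ∫ x, ((((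
      (fderiv ℝ U x e * fderiv ℝ ψ x (‖gradient U x‖ ^ (P x - 2) • gradient U x))
      + betaEps β ε (U x) * fderiv ℝ U x e * ψ x)
      + fe x * fderiv ℝ U x e * ψ x)
      - dens (P x) ‖gradient U x‖ * fderiv ℝ ψ x e)
      - ‖gradient U x‖ ^ P x / P x * Real.log ‖gradient U x‖ * fderiv ℝ P x e * ψ x)
      + ‖gradient U x‖ ^ P x / P x ^ 2 * fderiv ℝ P x e * ψ x := by
    congr 1
    ext x
    simp only [pohoIntegrand, hGψ, densDeriv]
    ring
  have J1 : Integrable fun x =>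
      fderiv ℝ U x e * fderiv ℝ ψ x (‖gradient U x‖ ^ (P x - 2) • gradient U x)
      + betaEps β ε (U x) * fderiv ℝ U x e * ψ x := I2.add Ib
  have J2 : Integrable fun x =>
      (fderiv ℝ U x e * fderiv ℝ ψ x (‖gradient U x‖ ^ (P x - 2) • gradient U x)
      + betaEps β ε (U x) * fderiv ℝ U x e * ψ x)
      + fe x * fderiv ℝ U x e * ψ x := J1.add I3
  have J3 : Integrable fun x =>
      ((fderiv ℝ U x e * fderiv ℝ ψ x (‖gradient U x‖ ^ (P x - 2) • gradient U x)
      + betaEps β ε (U x) * fderiv ℝ U x e * ψ x)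
      + fe x * fderiv ℝ U x e * ψ x)
      - dens (P x) ‖gradient U x‖ * fderiv ℝ ψ x e := J2.sub I1
  have J4 : Integrable fun x =>
      (((fderiv ℝ U x e * fderiv ℝ ψ x (‖gradient U x‖ ^ (P x - 2) • gradient U x)
      + betaEps β ε (U x) * fderiv ℝ U x e * ψ x)
      + fe x * fderiv ℝ U x e * ψ x)
      - dens (P x) ‖gradient U x‖ * fderiv ℝ ψ x e)
      - ‖gradient U x‖ ^ P x / P x * Real.log ‖gradient U x‖ * fderiv ℝ P x e * ψ x := J3.sub I4
  rw [hsum, integral_add J4 I5, integral_sub J3 I4, integral_sub J2 I1, integral_add J1 I3,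
    integral_add I2 Ib] at hmain
  linarith
end
end

section
/- Let Ω ⊆ ℝ^N be a domain, p : Ω → ℝ Lipschitz with 1 < p_min ≤ p(x) ≤ p_max < ∞, f ∈ L^∞(Ω), and let v ≥ 0 be locally Lipschitz on Ω and satisfy Δ_{p(x)} v ≥ f χ_{{v>0}} in the weak sense, i.e. for every nonnegative φ ∈ C_c^∞(Ω), ∫_Ω |∇v(x)|^{p(x)−2} ⟨∇v(x), ∇φ(x)⟩ dx ≤ −∫_{{v>0}} f(x) φ(x) dx. Let x₀ ∈ Ω ∩ {v = 0}. Then the following three statements are equivalent: (i) there exist c > 0, r₀ > 0 such that (1/|B_r(x₀)|) ∫_{B_r(x₀)} v dx ≥ c r for all 0 < r ≤ r₀ with B_r(x₀) ⊆ Ω; (ii) there exist c > 0, r₀ > 0 such that the spherical average (1/H^{N−1}(∂B_r(x₀))) ∫_{∂B_r(x₀)} v dH^{N−1} ≥ c r for all 0 < r ≤ r₀ with B_r(x₀) ⊆ Ω; (iii) there exist c > 0, r₀ > 0 such that sup_{B_r(x₀)} v ≥ c r for all 0 < r ≤ r₀ with B_r(x₀) ⊆ Ω. -/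
/-!
The averages are bounded by the supremum because `v` is continuous up to the sphere and the sphere
has finite Hausdorff measure; this gives (i) ⟹ (iii) and (ii) ⟹ (iii).

For (iii) ⟹ (i) only the Lipschitz bound `L` is used: a point `y` of `ball x₀ (r / 2)` with `v y`
comparable to `r` has around it a ball of radius proportional to `r`, inside `ball x₀ r`, on which
`v` is still comparable to `r`.

For (iii) ⟹ (ii) the differential inequality enters. Suppose `v ≤ m` on `∂B_r`. Testing with
`φ = (v - m)⁺` in `B_r` (admissible after mollification, `ineq_of_lipschitz`) gives
`∫ |∇φ|^{p(x)} ≤ C ∫ φ ≤ C' r^{N+1}`, because `0 ≤ φ ≤ L r`. From the pointwise inequality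
`a ≤ t + t^{1 - p_max} a^{p(x)}` for `0 < t ≤ 1` and the Poincaré inequality,
`∫ φ ≤ (t + C'' t^{1 - p_max} r) r^{N+1}` up to a dimensional constant. On the other hand, if `φ`
reaches `η r`, then by the Lipschitz bound `∫ φ ≥ κ(η) r^{N+1}` up to the same constant. Choosing `t`
and then `r` small shows `v < m + η r` in `B_r` for small `r` (`osc`). Consequently, if
`sup_{B_r} v ≥ c r`, some `z ∈ ∂B_r` has `v z > (c / 4) r`, so `v ≥ (c / 8) r` on a cap around `z` of
size proportional to `r`. Such a cap carries a fixed fraction of the measure of the sphere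
(`exists_cap_cover`), since finitely many of its rotated copies, their number independent of `r`,
cover the sphere.
-/

open MeasureTheory Metric Set Filter Topology Asymptotics RealInnerProductSpace

noncomputable section

/-! ### Mollification of Lipschitz functions -/

/-- The derivative of a mollified Lipschitz function is the mollified derivative: by Rademacher's
theorem one may differentiate `∫ b(t) φ(x - t) dt` under the integral sign. -/
theorem fderiv_mollify {N : ℕ} (φ : Euc N → ℝ) {K : NNReal} (hφ : LipschitzWith K φ)
    (b : ContDiffBump (0 : Euc N)) (x : Euc N) :
    HasFDerivAt (convolution (b.normed volume) φ (ContinuousLinearMap.lsmul ℝ ℝ) volume)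
      (convolution (b.normed volume) (fderiv ℝ φ) (ContinuousLinearMap.lsmul ℝ ℝ) volume x) x := by
  have hb : Integrable (b.normed volume) (volume : Measure (Euc N)) := b.integrable_normed
  have hbc : Continuous (b.normed (volume : Measure (Euc N))) := b.continuous_normed
  have hbs : HasCompactSupport (b.normed (volume : Measure (Euc N))) := b.hasCompactSupport_normed
  refine (hasFDerivAt_integral_of_dominated_loc_of_lip
    (F := fun x t => b.normed volume t • φ (x - t)) (bound := fun t => b.normed volume t * K)
    (F' := fun t => b.normed volume t • fderiv ℝ φ (x - t)) univ_mem ?_ ?_ ?_ ?_ ?_ ?_).2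
  · refine Eventually.of_forall fun y => ?_
    exact (hbc.smul (hφ.continuous.comp (by fun_prop))).aestronglyMeasurable
  · exact (hbc.smul (hφ.continuous.comp (by fun_prop))).integrable_of_hasCompactSupport
      (hbs.smul_right)
  · exact (hbc.measurable.smul ((measurable_fderiv ℝ φ).comp (by fun_prop))).aestronglyMeasurable
  · refine Eventually.of_forall fun t => ?_
    refine LipschitzWith.lipschitzOnWith (LipschitzWith.of_dist_le_mul fun y z => ?_)
    have h := hφ.dist_le_mul (y - t) (z - t)
    rw [dist_sub_right] at h
    have h0 : 0 ≤ b.normed volume t := b.nonneg_normed t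
    simp only [Real.coe_nnabs, smul_eq_mul, Real.dist_eq, ← mul_sub, abs_mul, abs_of_nonneg h0,
      NNReal.abs_eq] at h ⊢
    rw [mul_assoc]
    gcongr
  · exact hb.mul_const _
  · have h1 : ∀ᵐ y : Euc N, DifferentiableAt ℝ φ y := hφ.ae_differentiableAt
    have h2 : ∀ᵐ t : Euc N, DifferentiableAt ℝ φ (x - t) :=
      (volume.measurePreserving_sub_left x).quasiMeasurePreserving.ae h1
    filter_upwards [h2] with t ht
    have h3 : HasFDerivAt (fun y : Euc N => y - t) (ContinuousLinearMap.id ℝ (Euc N)) x :=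
      (hasFDerivAt_id x).sub_const t
    have := (ht.hasFDerivAt.comp x h3).const_smul (b.normed volume t)
    rw [ContinuousLinearMap.comp_id] at this
    exact this

/-- A compactly supported nonnegative Lipschitz function is the limit of nonnegative smooth functions
with uniformly controlled support and gradient, whose derivatives converge almost everywhere. -/
theorem exists_mollify {N : ℕ} (φ : Euc N → ℝ) {K : NNReal} (hφ : LipschitzWith K φ)
    (h0 : ∀ x, 0 ≤ φ x) {x₀ : Euc N} {r δ : ℝ} (hδ : 0 < δ)
    (hs : Function.support φ ⊆ closedBall x₀ r) :
    ∃ ψ : ℕ → Euc N → ℝ, (∀ n, ContDiff ℝ (⊤ : ℕ∞) (ψ n)) ∧ (∀ n x, 0 ≤ ψ n x) ∧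
      (∀ n, Function.support (ψ n) ⊆ closedBall x₀ (r + δ)) ∧
      (∀ n x, ‖fderiv ℝ (ψ n) x‖ ≤ K) ∧ (∀ n x, |ψ n x - φ x| ≤ K * δ) ∧
      (∀ x, Tendsto (fun n => ψ n x) atTop (𝓝 (φ x))) ∧
      (∀ᵐ x, Tendsto (fun n => fderiv ℝ (ψ n) x) atTop (𝓝 (fderiv ℝ φ x))) := by
  let b : ℕ → ContDiffBump (0 : Euc N) := fun n =>
    ⟨δ / (n + 1) / 2, δ / (n + 1), by positivity, half_lt_self (by positivity)⟩
  have hout : ∀ n, (b n).rOut = δ / (n + 1) := fun n => rfl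
  have hle : ∀ n, (b n).rOut ≤ δ := fun n => by
    rw [hout]; exact div_le_self hδ.le (by linarith [n.cast_nonneg (α := ℝ)])
  have htend : Tendsto (fun n => (b n).rOut) atTop (𝓝 0) := by
    simp only [hout]
    simpa [div_eq_mul_inv] using (tendsto_one_div_add_atTop_nhds_zero_nat (𝕜 := ℝ)).const_mul δ
  have hclose : ∀ n x, |convolution ((b n).normed volume) φ (ContinuousLinearMap.lsmul ℝ ℝ) volume x
      - φ x| ≤ K * (b n).rOut := fun n x => by
    rw [← Real.dist_eq]
    refine ContDiffBump.dist_normed_convolution_le hφ.continuous.aestronglyMeasurable fun y hy => ?_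
    exact (hφ.dist_le_mul y x).trans (by gcongr; exact (mem_ball.1 hy).le)
  refine ⟨fun n => convolution ((b n).normed volume) φ (ContinuousLinearMap.lsmul ℝ ℝ) volume,
    fun n => ?_, fun n x => ?_, fun n => ?_, fun n x => ?_, fun n x => ?_, fun x => ?_, ?_⟩
  · exact HasCompactSupport.contDiff_convolution_left _ (b n).hasCompactSupport_normed
      (b n).contDiff_normed hφ.continuous.locallyIntegrable
  · exact integral_nonneg fun t => mul_nonneg ((b n).nonneg_normed t) (h0 _)
  · refine (support_convolution_subset _).trans ?_
    rw [(b n).support_normed_eq]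
    rintro _ ⟨y, hy, z, hz, rfl⟩
    have h1 := mem_closedBall.1 (hs hz)
    have h2 := (mem_ball_zero_iff.1 hy).le.trans (hle n)
    rw [mem_closedBall, dist_eq_norm, add_sub_assoc]
    rw [dist_eq_norm] at h1
    exact (norm_add_le _ _).trans (by linarith)
  · rw [(fderiv_mollify φ hφ (b n) x).fderiv]
    have hi : Integrable ((b n).normed volume) (volume : Measure (Euc N)) := (b n).integrable_normed
    refine (norm_integral_le_of_norm_le (hi.mul_const (K : ℝ))
      (Eventually.of_forall fun t => ?_)).trans ?_
    · have h1 : 0 ≤ (b n).normed volume t := (b n).nonneg_normed t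
      simp only [ContinuousLinearMap.lsmul_apply, norm_smul, Real.norm_eq_abs, abs_of_nonneg h1]
      gcongr
      exact norm_fderiv_le_of_lipschitz ℝ hφ
    · rw [integral_mul_const, (b n).integral_normed, one_mul]
  · exact (hclose n x).trans (by gcongr; exact hle n)
  · rw [tendsto_iff_dist_tendsto_zero]
    refine squeeze_zero (fun _ => dist_nonneg) (fun n => hclose n x) ?_
    simpa using htend.const_mul (K : ℝ)
  · have hloc : LocallyIntegrable (fderiv ℝ φ) (volume : Measure (Euc N)) := by
      refine (locallyIntegrable_const (K : ℝ)).mono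
        (measurable_fderiv ℝ φ).aestronglyMeasurable (Eventually.of_forall fun x => ?_)
      simpa using norm_fderiv_le_of_lipschitz ℝ hφ
    have := ContDiffBump.ae_convolution_tendsto_right_of_locallyIntegrable (φ := b) (K := 2)
      htend (Eventually.of_forall fun n => by
        change δ / (n + 1) ≤ 2 * (δ / (n + 1) / 2); linarith) hloc
    filter_upwards [this] with x hx
    exact hx.congr fun n => ((fderiv_mollify φ hφ (b n) x).fderiv).symm

/-- The weak inequality `∫_Ω ∇φ · A ≤ -∫_S f φ` passes from smooth to Lipschitz test functions `φ`
as soon as the field `A` is bounded on a neighbourhood of the support of `φ`. -/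
theorem ineq_of_lipschitz {N : ℕ} {Ω S : Set (Euc N)} (hS : MeasurableSet S)
    (hSΩ : S ⊆ Ω) {A : Euc N → Euc N} (hAm : AEStronglyMeasurable A (volume.restrict Ω))
    {x₀ : Euc N} {r R M C : ℝ} (hrR : r < R) (hR : closedBall x₀ R ⊆ Ω)
    (hA : ∀ x ∈ ball x₀ R, ‖A x‖ ≤ M) {f : Euc N → ℝ} (hfm : Measurable f)
    (hf : ∀ x ∈ Ω, |f x| ≤ C)
    (hsub : ∀ φ : Euc N → ℝ, IsTest Ω φ → (∀ x, 0 ≤ φ x) →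
      (∫ x in Ω, fderiv ℝ φ x (A x)) ≤ - ∫ x in S, f x * φ x)
    {φ : Euc N → ℝ} {K : NNReal} (hφ : LipschitzWith K φ) (h0 : ∀ x, 0 ≤ φ x)
    (hs : Function.support φ ⊆ closedBall x₀ r) :
    (∫ x in Ω, fderiv ℝ φ x (A x)) ≤ - ∫ x in S, f x * φ x := by
  set δ := (R - r) / 2 with hδ
  have hδ0 : 0 < δ := by rw [hδ]; linarith
  have hδR : r + δ < R := by rw [hδ]; linarith
  obtain ⟨ψ, hψc, hψ0, hψs, hψK, hψB, hψt, hψd⟩ := exists_mollify φ hφ h0 hδ0 hs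
  have hts : ∀ n, tsupport (ψ n) ⊆ closedBall x₀ (r + δ) := fun n =>
    closure_minimal (hψs n) isClosed_closedBall
  have hsR : closedBall x₀ (r + δ) ⊆ ball x₀ R := closedBall_subset_ball hδR
  have htest : ∀ n, IsTest Ω (ψ n) := fun n =>
    ⟨hψc n, HasCompactSupport.of_support_subset_isCompact (isCompact_closedBall _ _) (hψs n),
      (hts n).trans (hsR.trans (ball_subset_closedBall.trans hR))⟩
  have hφc : HasCompactSupport φ :=
    HasCompactSupport.of_support_subset_isCompact (isCompact_closedBall _ _) hs
  obtain ⟨B, hB⟩ := hφc.exists_bound_of_continuous hφ.continuous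
  have hbd : ∀ c : ℝ, Integrable ((ball x₀ R).indicator fun _ => c) (volume : Measure (Euc N)) :=
    fun c => (integrable_indicator_iff measurableSet_ball).2
      (integrableOn_const (by finiteness) (by finiteness))
  have hlim1 : Tendsto (fun n => ∫ x in Ω, fderiv ℝ (ψ n) x (A x)) atTop
      (𝓝 (∫ x in Ω, fderiv ℝ φ x (A x))) := by
    refine tendsto_integral_of_dominated_convergence ((ball x₀ R).indicator fun _ => K * M)
      (fun n => ?_) (hbd _).integrableOn (fun n => Eventually.of_forall fun x => ?_) ?_
    · exact Continuous.comp_aestronglyMeasurable₂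
        (g := fun (T : Euc N →L[ℝ] ℝ) (y : Euc N) => T y) isBoundedBilinearMap_apply.continuous
        (measurable_fderiv ℝ (ψ n)).aestronglyMeasurable hAm
    · by_cases hx : x ∈ ball x₀ R
      · rw [indicator_of_mem hx]
        exact (ContinuousLinearMap.le_opNorm _ _).trans
          (mul_le_mul (hψK n x) (hA x hx) (norm_nonneg _) K.2)
      · rw [indicator_of_notMem hx, fderiv_of_notMem_tsupport ℝ fun h => hx (hsR (hts n h))]
        simp
    · filter_upwards [ae_restrict_of_ae hψd] with x hx
      exact ((ContinuousLinearMap.apply ℝ ℝ (A x)).continuous.tendsto _).comp hx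
  have hlim2 : Tendsto (fun n => ∫ x in S, f x * ψ n x) atTop (𝓝 (∫ x in S, f x * φ x)) := by
    refine tendsto_integral_of_dominated_convergence
      ((ball x₀ R).indicator fun _ => C * (K * δ + B))
      (fun n => (hfm.mul (hψc n).continuous.measurable).aestronglyMeasurable)
      (hbd _).integrableOn (fun n => ae_restrict_of_forall_mem hS fun x hxS => ?_)
      (Eventually.of_forall fun x => (hψt x).const_mul _)
    by_cases hx : x ∈ ball x₀ R
    · rw [indicator_of_mem hx, norm_mul]
      have h1 := hf x (hSΩ hxS)
      refine mul_le_mul h1 ?_ (norm_nonneg _) ((abs_nonneg _).trans h1)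
      calc ‖ψ n x‖ = ‖(ψ n x - φ x) + φ x‖ := by rw [sub_add_cancel]
        _ ≤ _ := (norm_add_le _ _).trans (add_le_add (hψB n x) (hB x))
    · have : ψ n x = 0 := by
        by_contra h
        exact hx (hsR (hψs n h))
      simp [this, hx]
  exact le_of_tendsto_of_tendsto' hlim1 hlim2.neg fun n => hsub _ (htest n) (hψ0 n)

/-! ### Integral estimates for Lipschitz functions on balls -/

/-- An `L¹` Poincaré inequality: integrate `φ = φ ∂ₑ⟪e, x - x₀⟫` by parts for a unit vector `e`. -/
theorem integral_le_integral_fderiv {N : ℕ} (hN : 1 ≤ N) {φ : Euc N → ℝ} {K : NNReal}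
    (hφ : LipschitzWith K φ) {x₀ : Euc N} {r : ℝ} (hs : Function.support φ ⊆ closedBall x₀ r) :
    Integrable (fun x => ‖fderiv ℝ φ x‖) ∧ ∫ x, φ x ≤ (∫ x, ‖fderiv ℝ φ x‖) * r := by
  have : Nonempty (Fin N) := ⟨⟨0, hN⟩⟩
  have hφc : HasCompactSupport φ :=
    HasCompactSupport.of_support_subset_isCompact (isCompact_closedBall _ _) hs
  have hts : tsupport φ ⊆ closedBall x₀ r := closure_minimal hs isClosed_closedBall
  have hz : ∀ x, x ∉ closedBall x₀ r → fderiv ℝ φ x = 0 := fun x hx =>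
    fderiv_of_notMem_tsupport ℝ fun h => hx (hts h)
  have hint : Integrable (fun x => ‖fderiv ℝ φ x‖) := by
    refine Integrable.mono' (g := (closedBall x₀ r).indicator fun _ => (K : ℝ))
      ((integrable_indicator_iff measurableSet_closedBall).2
        (integrableOn_const measure_closedBall_lt_top.ne (by finiteness)))
      (measurable_fderiv ℝ φ).norm.aestronglyMeasurable (Eventually.of_forall fun x => ?_)
    by_cases hx : x ∈ closedBall x₀ r
    · rw [indicator_of_mem hx, norm_norm]
      exact norm_fderiv_le_of_lipschitz ℝ hφ
    · rw [hz x hx]; simp [hx]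
  refine ⟨hint, ?_⟩
  obtain ⟨e, he⟩ := exists_norm_eq (Euc N) zero_le_one
  let g : Euc N → ℝ := fun x => ⟪e, x - x₀⟫
  have hg : LipschitzWith 1 g := LipschitzWith.of_dist_le_mul fun x y => by
    have : g x - g y = ⟪e, x - y⟫ := by
      simp only [g, ← inner_sub_right, sub_sub_sub_cancel_right]
    rw [Real.dist_eq, this, dist_eq_norm, NNReal.coe_one, ← he]
    exact abs_real_inner_le_norm _ _
  have hgd : ∀ x, lineDeriv ℝ g x e = 1 := fun x => by
    have h1 : HasFDerivAt g (innerSL ℝ e) x := by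
      have := (innerSL ℝ e).hasFDerivAt (x := x - x₀) |>.comp x ((hasFDerivAt_id x).sub_const x₀)
      rw [ContinuousLinearMap.comp_id] at this
      exact this
    rw [h1.differentiableAt.lineDeriv_eq_fderiv, h1.fderiv]
    simp [he]
  have key := LipschitzWith.integral_lineDeriv_mul_eq (μ := volume) hg hφ hφc e
  simp only [hgd, one_mul] at key
  rw [key, ← integral_mul_const]
  refine (Real.le_norm_self _).trans (norm_integral_le_of_norm_le (hint.mul_const r) ?_)
  filter_upwards [hφ.ae_differentiableAt (μ := volume)] with x hx
  rw [hx.lineDeriv_eq_fderiv, norm_mul]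
  by_cases hxr : x ∈ closedBall x₀ r
  · refine mul_le_mul ?_ ?_ (norm_nonneg _) (norm_nonneg _)
    · simpa [he] using (fderiv ℝ φ x).le_opNorm (-e)
    · refine (abs_real_inner_le_norm _ _).trans ?_
      rw [he, one_mul, ← dist_eq_norm]
      exact hxr
  · rw [hz x hxr]; simp

theorem volume_real_ball {N : ℕ} (y : Euc N) {ρ : ℝ} (hρ : 0 < ρ) :
    volume.real (ball y ρ) = ρ ^ N * volume.real (ball (0 : Euc N) 1) := by
  rw [measureReal_def, Measure.addHaar_ball_of_pos _ _ hρ, ENNReal.toReal_mul,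
    ENNReal.toReal_ofReal (by positivity), finrank_euclideanSpace_fin]
  rfl

theorem volume_real_unit_pos {N : ℕ} : 0 < volume.real (ball (0 : Euc N) 1) :=
  ENNReal.toReal_pos (measure_ball_pos _ _ one_pos).ne' (by finiteness)

/-- A `K`-Lipschitz function which is at least `s` at `y` stays above `s / 2` on the ball of radius
`s / (2K)` around `y`, which bounds its integral from below. -/
theorem le_integral_of_lipschitz {N : ℕ} {φ : Euc N → ℝ} {K : NNReal} (hK : 0 < K)
    (hφ : LipschitzWith K φ) (h0 : ∀ x, 0 ≤ φ x) (hi : Integrable φ) {y : Euc N} {s : ℝ}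
    (hs : 0 < s) (hy : s ≤ φ y) :
    s / 2 * ((s / (2 * K)) ^ N * volume.real (ball (0 : Euc N) 1)) ≤ ∫ x, φ x := by
  have hK' : (0 : ℝ) < K := hK
  rw [← volume_real_ball y (by positivity)]
  refine le_trans ?_ (setIntegral_le_integral (s := ball y (s / (2 * K))) hi
    (Eventually.of_forall h0))
  refine setIntegral_ge_of_const_le_real measurableSet_ball (by finiteness) (fun x hx => ?_)
    hi.integrableOn
  have h1 := (abs_le.1 (hφ.dist_le_mul x y)).1
  have h2 : K * dist x y ≤ K * (s / (2 * K)) := by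
    gcongr; exact (mem_ball.1 hx).le
  have h3 : K * (s / (2 * K)) = s / 2 := by field_simp
  linarith

/-- A Young-type inequality whose constant depends on the exponent `q` only through its upper
bound `P`; it replaces Hölder's inequality for the variable exponent. -/
theorem le_add_rpow {a t q P : ℝ} (ha : 0 ≤ a) (ht : 0 < t) (ht1 : t ≤ 1) (hq : 1 ≤ q)
    (hqP : q ≤ P) : a ≤ t + t ^ (1 - P) * a ^ q := by
  have hn : 0 ≤ t ^ (1 - P) * a ^ q := by positivity
  rcases le_total a t with h | h
  · linarith
  · have ha0 : 0 < a := ht.trans_le h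
    have h1 : a ^ (1 - q) ≤ t ^ (1 - P) :=
      (Real.rpow_le_rpow_of_nonpos ht h (by linarith)).trans
        (Real.rpow_le_rpow_of_exponent_ge ht ht1 (by linarith))
    have h2 : a = a ^ (1 - q) * a ^ q := by
      rw [← Real.rpow_add ha0]; simp
    have h3 : a ^ (1 - q) * a ^ q ≤ t ^ (1 - P) * a ^ q := by gcongr
    linarith

/-! ### The PDE estimate: the interior excess over the boundary values is `o(r)` -/

/-- Testing the equation with `φ = (v - m)⁺` on `ball x₀ r`, where `v ≤ m` on the sphere, gives
`∫ |∇φ|^{p(x)} ≤ C ∫ φ`, which is at most a constant times `r ^ (N + 1)`. The Young-type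
inequality `le_add_rpow` and the Poincaré inequality turn this into an upper bound for `∫ φ`, while
an excess `v y ≥ m + s` gives the lower bound on the left. -/
theorem osc_est {N : ℕ} (hN : 1 ≤ N) {Ω : Set (Euc N)} (hΩ : IsOpen Ω) {pmin pmax : ℝ}
    (hp1 : 1 < pmin) {p : Euc N → ℝ} (hp : ∀ x ∈ Ω, pmin ≤ p x ∧ p x ≤ pmax)
    (hpc : ContinuousOn p Ω) {f : Euc N → ℝ} (hfm : Measurable f) {C : ℝ}
    (hf : ∀ x ∈ Ω, |f x| ≤ C) {v : Euc N → ℝ} (hvc : ContinuousOn v Ω)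
    (hsub : ∀ φ : Euc N → ℝ, IsTest Ω φ → (∀ x, 0 ≤ φ x) →
      (∫ x in Ω, ‖gradient v x‖ ^ (p x - 2) * ⟪gradient v x, gradient φ x⟫)
        ≤ - ∫ x in {x | x ∈ Ω ∧ 0 < v x}, f x * φ x)
    {x₀ : Euc N} {R : ℝ} (hR : closedBall x₀ R ⊆ Ω) {L : NNReal} (hL : 1 ≤ L)
    (hvL : LipschitzOnWith L v (closedBall x₀ R)) {r : ℝ} (hr : 0 < r) (hrR : r < R) {m : ℝ}
    (hm : ∀ z ∈ sphere x₀ r, v z ≤ m) {y : Euc N} (hy : y ∈ ball x₀ r) {s : ℝ} (hs : 0 < s)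
    (hys : m + s ≤ v y) {t : ℝ} (ht : 0 < t) (ht1 : t ≤ 1) :
    s / 2 * ((s / (2 * L)) ^ N * volume.real (ball (0 : Euc N) 1)) ≤
      (t + t ^ (1 - pmax) * (C * (L * r))) * (r ^ N * volume.real (ball (0 : Euc N) 1)) * r := by
  have : Nonempty (Fin N) := ⟨⟨0, hN⟩⟩
  have hL1 : (1 : ℝ) ≤ L := hL
  have hC : 0 ≤ C := (abs_nonneg _).trans (hf x₀ (hR (mem_closedBall_self (hr.trans hrR).le)))
  obtain ⟨w, hwL, hwv⟩ := hvL.extend_real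
  have hbR : closedBall x₀ r ⊆ closedBall x₀ R := closedBall_subset_closedBall hrR.le
  -- Since `v ≤ m` on the sphere, the Lipschitz bound forces `v - m` below this cone in the ball.
  -- Taking the minimum with the cone hence changes nothing in the ball, and it makes the positive
  -- part vanish outside, so that the resulting test function is globally Lipschitz.
  have hcone : LipschitzWith L (fun x : Euc N => (L : ℝ) * (r - dist x x₀)) :=
    LipschitzWith.of_dist_le_mul fun x z => by
      rw [Real.dist_eq, ← mul_sub, abs_mul, NNReal.abs_eq, sub_sub_sub_cancel_left, dist_comm x z]
      gcongr
      exact abs_dist_sub_le _ _ _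
  set φ : Euc N → ℝ := fun x => max 0 (min (w x - m) ((L : ℝ) * (r - dist x x₀))) with hφdef
  have hφ : LipschitzWith L φ := by
    have h1 : LipschitzWith L (fun x => w x - m) := LipschitzWith.of_dist_le_mul fun x z => by
      rw [dist_sub_right]; exact hwL.dist_le_mul x z
    have h2 := (h1.min hcone).const_max 0
    rwa [max_self] at h2
  have h0 : ∀ x, 0 ≤ φ x := fun x => le_max_left _ _
  have hout : ∀ x, x ∉ ball x₀ r → φ x = 0 := fun x hx => by
    have h1 : r ≤ dist x x₀ := by simpa using hx
    exact max_eq_left ((min_le_right _ _).trans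
      (mul_nonpos_of_nonneg_of_nonpos L.2 (by linarith)))
  have hin : ∀ x ∈ ball x₀ r, φ x = max 0 (v x - m) := fun x hx => by
    have hxr : dist x x₀ < r := hx
    obtain ⟨z, hz, hxz⟩ : ∃ z ∈ sphere x₀ r, dist x z = r - dist x x₀ := by
      rcases eq_or_ne x x₀ with rfl | hne
      · obtain ⟨e, he⟩ := exists_norm_eq (Euc N) hr.le
        exact ⟨x + e, by simp [he], by simp [he]⟩
      · have hd : 0 < dist x x₀ := dist_pos.2 hne
        refine ⟨x₀ + (r / dist x x₀) • (x - x₀), ?_, ?_⟩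
        · rw [mem_sphere, dist_eq_norm, add_sub_cancel_left, norm_smul, ← dist_eq_norm,
            Real.norm_of_nonneg (by positivity), div_mul_cancel₀ _ hd.ne']
        · have : x - (x₀ + (r / dist x x₀) • (x - x₀)) = -((r / dist x x₀ - 1) • (x - x₀)) := by
            rw [sub_smul, one_smul]; abel
          have h1 : 1 ≤ r / dist x x₀ := by rw [le_div_iff₀ hd]; linarith
          rw [dist_eq_norm x, this, norm_neg, norm_smul, ← dist_eq_norm x,
            Real.norm_of_nonneg (by linarith), sub_mul, div_mul_cancel₀ _ hd.ne', one_mul]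
    have hxR : x ∈ closedBall x₀ R := hbR (ball_subset_closedBall hx)
    have hzR : z ∈ closedBall x₀ R := hbR (sphere_subset_closedBall hz)
    have h1 := (abs_le.1 (hvL.dist_le_mul x hxR z hzR)).2
    have h2 := hm z hz
    rw [hxz] at h1
    simp only [hφdef]
    rw [← hwv hxR, min_eq_left (by linarith)]
  have hsupp : Function.support φ ⊆ closedBall x₀ r := fun x hx => by
    by_contra h
    exact hx (hout x fun h' => h (ball_subset_closedBall h'))
  have hφle : ∀ x, φ x ≤ L * r := fun x => by
    refine max_le (by positivity) ((min_le_right _ _).trans ?_)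
    gcongr
    linarith [dist_nonneg (x := x) (y := x₀)]
  have hd0 : ∀ x, φ x = 0 → fderiv ℝ φ x = 0 := fun x hx =>
    -- a zero of the nonnegative function `φ` is a minimum
    IsLocalMin.fderiv_eq_zero (Eventually.of_forall fun z => by rw [hx]; exact h0 z)
  have hd1 : ∀ x, 0 < φ x → x ∈ ball x₀ r ∧ fderiv ℝ φ x = fderiv ℝ v x := fun x hx => by
    have hxb : x ∈ ball x₀ r := by
      by_contra h
      exact hx.ne' (hout x h)
    refine ⟨hxb, ?_⟩
    have : φ =ᶠ[𝓝 x] fun z => v z - m := by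
      filter_upwards [isOpen_ball.mem_nhds hxb,
        (isOpen_lt continuous_const hφ.continuous).mem_nhds hx] with z hz hz0
      rw [hin z hz]
      refine max_eq_right ?_
      by_contra h
      have h1 := hin z hz
      rw [max_eq_left (not_le.1 h).le] at h1
      exact hz0.ne' h1
    rw [this.fderiv_eq, fderiv_sub_const]
  set A : Euc N → Euc N := fun x => ‖gradient v x‖ ^ (p x - 2) • gradient v x with hAdef
  have hgm : Measurable (gradient v) :=
    (InnerProductSpace.toDual ℝ (Euc N)).symm.continuous.measurable.comp (measurable_fderiv ℝ v)
  have hgn : ∀ x, ‖gradient v x‖ = ‖fderiv ℝ v x‖ := fun x =>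
    (InnerProductSpace.toDual ℝ (Euc N)).symm.norm_map _
  have hpm : AEMeasurable p (volume.restrict Ω) := hpc.aemeasurable hΩ.measurableSet
  have hAm : AEStronglyMeasurable A (volume.restrict Ω) :=
    ((hgm.norm.aemeasurable.pow (hpm.sub_const 2)).smul hgm.aemeasurable).aestronglyMeasurable
  have hAb : ∀ x ∈ ball x₀ R, ‖A x‖ ≤ (L : ℝ) ^ (pmax - 1) := fun x hx => by
    have hxΩ := hR (ball_subset_closedBall hx)
    rcases eq_or_lt_of_le (norm_nonneg (gradient v x)) with h | h
    · simp only [hAdef, norm_smul, ← h, mul_zero]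
      positivity
    · have h1 : ‖A x‖ = ‖gradient v x‖ ^ (p x - 1) := by
        simp only [hAdef, norm_smul]
        rw [Real.norm_of_nonneg (by positivity), ← Real.rpow_add_one h.ne']
        congr 1; ring
      have h2 : ‖gradient v x‖ ≤ L := by
        rw [hgn]
        exact norm_fderiv_le_of_lipschitzOn ℝ
          (mem_of_superset (isOpen_ball.mem_nhds hx) ball_subset_closedBall) hvL
      rw [h1]
      have h3 := hp x hxΩ
      exact (Real.rpow_le_rpow h.le h2 (by linarith)).trans
        (Real.rpow_le_rpow_of_exponent_le hL1 (by linarith))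
  have hpair : ∀ (g : Euc N → ℝ) x,
      ‖gradient v x‖ ^ (p x - 2) * ⟪gradient v x, gradient g x⟫ = fderiv ℝ g x (A x) :=
    fun g x => by simp [hAdef, inner_gradient_right]
  simp only [hpair] at hsub
  have hSo : MeasurableSet {x | x ∈ Ω ∧ 0 < v x} :=
    (hvc.isOpen_inter_preimage hΩ isOpen_Ioi).measurableSet
  have hineq := ineq_of_lipschitz hSo (fun x hx => hx.1) hAm hrR hR hAb hfm hf hsub hφ h0 hsupp
  -- `∇φ` is either `∇v` or `0`, so pairing it with the flux gives the energy density
  have henergy : ∀ x ∈ Ω, fderiv ℝ φ x (A x) = ‖fderiv ℝ φ x‖ ^ p x := fun x hx => by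
    have hpx := hp x hx
    rcases (h0 x).eq_or_lt with h | h
    · rw [hd0 x h.symm, norm_zero, Real.zero_rpow (by linarith)]; rfl
    · rw [(hd1 x h).2, ← hgn, ← hpair, real_inner_self_eq_norm_sq]
      rcases eq_or_lt_of_le (norm_nonneg (gradient v x)) with h' | h'
      · rw [← h', Real.zero_rpow (by linarith : p x ≠ 0)]; simp
      · rw [← Real.rpow_add_natCast h'.ne']; norm_num
  have hball : ∀ c : ℝ, Integrable ((ball x₀ r).indicator fun _ => c)
      (volume : Measure (Euc N)) := fun c =>
    (integrable_indicator_iff measurableSet_ball).2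
      (integrableOn_const (by finiteness) (by finiteness))
  have hballint : ∀ c : ℝ, ∫ x, (ball x₀ r).indicator (fun _ => c) x =
      c * (r ^ N * volume.real (ball (0 : Euc N) 1)) := fun c => by
    rw [integral_indicator measurableSet_ball, setIntegral_const, smul_eq_mul,
      volume_real_ball _ hr, mul_comm]
  have hbr : ball x₀ r ⊆ Ω := ball_subset_closedBall.trans (hbR.trans hR)
  have hrhs : (∫ x in Ω, ‖fderiv ℝ φ x‖ ^ p x) ≤
      C * (L * r) * (r ^ N * volume.real (ball (0 : Euc N) 1)) := by
    rw [← setIntegral_congr_fun hΩ.measurableSet henergy, ← hballint]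
    refine hineq.trans ((neg_le_abs _).trans ?_)
    rw [← Real.norm_eq_abs]
    refine (norm_integral_le_of_norm_le (hball (C * (L * r))).integrableOn
      (ae_restrict_of_forall_mem hSo fun x hx => ?_)).trans
      (setIntegral_le_integral (hball _) (Eventually.of_forall fun x => ?_))
    · by_cases hxb : x ∈ ball x₀ r
      · rw [indicator_of_mem hxb, norm_mul, Real.norm_of_nonneg (h0 x)]
        exact mul_le_mul (hf x hx.1) (hφle x) (h0 x) hC
      · rw [hout x hxb]; simp [hxb]
    · exact indicator_nonneg (fun _ _ => by positivity) x
  obtain ⟨hgi, hpoin⟩ := integral_le_integral_fderiv hN hφ hsupp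
  have hdz : ∀ x, x ∉ ball x₀ r → fderiv ℝ φ x = 0 := fun x hx => hd0 x (hout x hx)
  have hpi : IntegrableOn (fun x => ‖fderiv ℝ φ x‖ ^ p x) Ω := by
    refine Integrable.mono' (hball ((L : ℝ) ^ pmax)).integrableOn
      (((measurable_fderiv ℝ φ).norm.aemeasurable.pow hpm).aestronglyMeasurable)
      (ae_restrict_of_forall_mem hΩ.measurableSet fun x hx => ?_)
    have hpx := hp x hx
    rw [Real.norm_of_nonneg (by positivity)]
    by_cases hxb : x ∈ ball x₀ r
    · rw [indicator_of_mem hxb]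
      exact (Real.rpow_le_rpow (norm_nonneg _) (norm_fderiv_le_of_lipschitz ℝ hφ)
        (by linarith)).trans (Real.rpow_le_rpow_of_exponent_le hL1 hpx.2)
    · rw [hdz x hxb, norm_zero, Real.zero_rpow (by linarith)]; simp [hxb]
  have hgrad : ∫ x, ‖fderiv ℝ φ x‖ ≤
      (t + t ^ (1 - pmax) * (C * (L * r))) * (r ^ N * volume.real (ball (0 : Euc N) 1)) := by
    have h1 : ∫ x in Ω, ‖fderiv ℝ φ x‖ = ∫ x, ‖fderiv ℝ φ x‖ :=
      setIntegral_eq_integral_of_forall_compl_eq_zero fun x hx => by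
        rw [hdz x fun h => hx (hbr h), norm_zero]
    have h2 : ∫ x in Ω, ‖fderiv ℝ φ x‖ ≤
        ∫ x in Ω, ((ball x₀ r).indicator (fun _ => t) x +
          t ^ (1 - pmax) * ‖fderiv ℝ φ x‖ ^ p x) := by
      refine setIntegral_mono_on hgi.integrableOn
        ((hball t).integrableOn.add (hpi.const_mul _)) hΩ.measurableSet fun x hx => ?_
      have hpx := hp x hx
      by_cases hxb : x ∈ ball x₀ r
      · rw [indicator_of_mem hxb]
        exact le_add_rpow (norm_nonneg _) ht ht1 (by linarith) hpx.2
      · rw [indicator_of_notMem hxb, hdz x hxb, norm_zero]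
        positivity
    rw [integral_add (hball t).integrableOn (hpi.const_mul _), integral_const_mul] at h2
    have h3 : ∫ x in Ω, (ball x₀ r).indicator (fun _ => t) x ≤
        t * (r ^ N * volume.real (ball (0 : Euc N) 1)) := by
      rw [← hballint]
      exact setIntegral_le_integral (hball _)
        (Eventually.of_forall fun x => indicator_nonneg (fun _ _ => ht.le) x)
    have h4 : 0 ≤ t ^ (1 - pmax) := by positivity
    have h5 := mul_le_mul_of_nonneg_left hrhs h4
    linarith
  have hφc : HasCompactSupport φ :=
    HasCompactSupport.of_support_subset_isCompact (isCompact_closedBall _ _) hsupp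
  have hlow := le_integral_of_lipschitz (zero_lt_one.trans_le hL) hφ h0
    (hφ.continuous.integrable_of_hasCompactSupport hφc) hs
    (show s ≤ φ y by rw [hin y hy]; exact le_max_of_le_right (by linarith))
  exact hlow.trans (hpoin.trans (by gcongr))

/-- If `v ≤ m` on the sphere of a small radius `r`, then `v < m + η r` in the ball: in `osc_est` with
`s = η r`, both sides scale like `r ^ (N + 1)`, and the right-hand factor `t + O(r)` can be made
smaller than the fixed constant `κ` on the left. -/
theorem osc {N : ℕ} (hN : 1 ≤ N) {Ω : Set (Euc N)} (hΩ : IsOpen Ω) {pmin pmax : ℝ}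
    (hp1 : 1 < pmin) {p : Euc N → ℝ} (hp : ∀ x ∈ Ω, pmin ≤ p x ∧ p x ≤ pmax)
    (hpc : ContinuousOn p Ω) {f : Euc N → ℝ} (hfm : Measurable f) {C : ℝ}
    (hf : ∀ x ∈ Ω, |f x| ≤ C) {v : Euc N → ℝ} (hvc : ContinuousOn v Ω)
    (hsub : ∀ φ : Euc N → ℝ, IsTest Ω φ → (∀ x, 0 ≤ φ x) →
      (∫ x in Ω, ‖gradient v x‖ ^ (p x - 2) * ⟪gradient v x, gradient φ x⟫)
        ≤ - ∫ x in {x | x ∈ Ω ∧ 0 < v x}, f x * φ x)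
    {x₀ : Euc N} {R : ℝ} (hR0 : 0 < R) (hR : closedBall x₀ R ⊆ Ω) {L : NNReal} (hL : 1 ≤ L)
    (hvL : LipschitzOnWith L v (closedBall x₀ R)) {η : ℝ} (hη : 0 < η) :
    ∃ r₁ > 0, ∀ r, 0 < r → r ≤ r₁ → ∀ m, (∀ z ∈ sphere x₀ r, v z ≤ m) →
      ∀ y ∈ ball x₀ r, v y < m + η * r := by
  have hL1 : (1 : ℝ) ≤ L := hL
  have hC : 0 ≤ C := (abs_nonneg _).trans (hf x₀ (hR (mem_closedBall_self hR0.le)))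
  set κ : ℝ := η / 2 * (η / (2 * L)) ^ N with hκ
  have hκ0 : 0 < κ := by positivity
  set t : ℝ := min 1 (κ / 4) with htdef
  have ht : 0 < t := by positivity
  set D : ℝ := t ^ (1 - pmax) * (C * L) with hD
  have hD0 : 0 ≤ D := by positivity
  refine ⟨min (R / 2) (κ / (4 * (D + 1))), by positivity, fun r hr hr1 m hm y hy => ?_⟩
  by_contra! hcon
  have h1 := osc_est hN hΩ hp1 hp hpc hfm hf hvc hsub hR hL hvL hr
    (by linarith [hr1.trans (min_le_left _ _)]) hm hy (by positivity : 0 < η * r) hcon ht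
    (min_le_left _ _)
  have hω := volume_real_unit_pos (N := N)
  set ω := volume.real (ball (0 : Euc N) 1)
  have h2 : η * r / 2 * ((η * r / (2 * L)) ^ N * ω) = κ * (r ^ N * ω * r) := by
    rw [hκ, mul_div_right_comm η r (2 * (L : ℝ)), mul_pow]; ring
  have h3 : (t + t ^ (1 - pmax) * (C * (L * r))) * (r ^ N * ω) * r =
      (t + D * r) * (r ^ N * ω * r) := by rw [hD]; ring
  rw [h2, h3] at h1
  have h4 := le_of_mul_le_mul_right h1 (by positivity)
  have h5 : t ≤ κ / 4 := min_le_right _ _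
  have h6 : (D + 1) * r ≤ κ / 4 := by
    have := hr1.trans (min_le_right _ _)
    rw [le_div_iff₀ (by positivity)] at this
    linarith
  linarith

/-! ### Hausdorff measure of spheres and spherical caps -/

/-- The parametrization `y ↦ (√(1 - |y|²), y)` of the upper unit hemisphere of `ℝ^(n+1)`. Its domain
is `Fin n → ℝ`, with the sup norm, because there Lebesgue measure is the `n`-dimensional Hausdorff
measure. -/
def capChart (n : ℕ) (y : Fin n → ℝ) : Euc (n + 1) :=
  WithLp.toLp 2 (Fin.cons (√(1 - ∑ i, y i ^ 2)) y)

theorem capChart_mem {n : ℕ} {y : Fin n → ℝ} (hy : ∑ i, y i ^ 2 ≤ 1) :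
    capChart n y ∈ sphere (0 : Euc (n + 1)) 1 := by
  rw [mem_sphere_zero_iff_norm, EuclideanSpace.norm_eq, Fin.sum_univ_succ]
  simp [capChart, Real.sq_sqrt (sub_nonneg.2 hy)]

theorem pi_hausdorff (n : ℕ) :
    (μH[((n + 1 : ℕ) : ℝ) - 1] : Measure (Fin n → ℝ)) = volume := by
  rw [← hausdorffMeasure_pi_real]; simp

theorem capChart_contDiffAt (n : ℕ) : ContDiffAt ℝ 1 (capChart n) 0 := by
  rw [contDiffAt_euclidean]
  intro i
  refine Fin.cases ?_ (fun j => ?_) i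
  · simp only [capChart, Fin.cons_zero]
    refine ContDiffAt.sqrt (by fun_prop) (by simp)
  · simp only [capChart, Fin.cons_succ]
    fun_prop

/-- A small cap around the pole is the image under `capChart` of a subset of a ball on which the chart is
Lipschitz, so it has finite measure. -/
theorem exists_cap_lt_top (n : ℕ) : ∃ e ∈ sphere (0 : Euc (n + 1)) 1, ∃ δ > 0,
    μH[((n + 1 : ℕ) : ℝ) - 1] (sphere (0 : Euc (n + 1)) 1 ∩ ball e δ) < ⊤ := by
  obtain ⟨K, t, ht, hK⟩ := (capChart_contDiffAt n).exists_lipschitzOnWith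
  obtain ⟨ε, hε, hεt⟩ := Metric.mem_nhds_iff.1 ht
  refine ⟨EuclideanSpace.single 0 1, by simp, min ε 1, by positivity, ?_⟩
  have h1 := (hK.mono hεt).hausdorffMeasure_image_le (d := ((n + 1 : ℕ) : ℝ) - 1) (by simp)
  rw [pi_hausdorff] at h1
  refine (measure_mono ?_).trans_lt (h1.trans_lt
    (ENNReal.mul_lt_top (ENNReal.rpow_lt_top_of_nonneg (by simp) (by simp)) measure_ball_lt_top))
  rintro x ⟨hx, hxe⟩
  have hxe : dist x (EuclideanSpace.single 0 1) < min ε 1 := hxe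
  rw [dist_eq_norm] at hxe
  have hc : ∀ i, |x i - (EuclideanSpace.single (0 : Fin (n + 1)) (1 : ℝ)) i| < min ε 1 :=
    fun i => (PiLp.norm_apply_le (x - EuclideanSpace.single 0 1) i).trans_lt hxe
  have hx0 : 0 < x 0 := by
    have h := (abs_lt.1 ((hc 0).trans_le (min_le_right _ _))).1
    simp at h
    linarith
  refine ⟨fun i => x i.succ, ?_, ?_⟩
  · rw [mem_ball_zero_iff, pi_norm_lt_iff hε]
    intro i
    simpa using (hc i.succ).trans_le (min_le_left _ _)
  · have hs : x 0 ^ 2 + ∑ i : Fin n, x i.succ ^ 2 = 1 := by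
      rw [mem_sphere_zero_iff_norm] at hx
      have h2 := EuclideanSpace.real_norm_sq_eq x
      rw [hx, Fin.sum_univ_succ] at h2
      linarith
    have h3 : √(1 - ∑ i : Fin n, x i.succ ^ 2) = x 0 := by
      rw [← hs, add_sub_cancel_right, Real.sqrt_sq hx0.le]
    ext i
    refine Fin.cases ?_ (fun j => ?_) i
    · simp [capChart, h3]
    · simp [capChart]

/-- The unit sphere projects, by a `1`-Lipschitz map, onto a set containing the open unit ball of the
equatorial hyperplane. -/
theorem unit_sphere_pos (n : ℕ) :
    0 < μH[((n + 1 : ℕ) : ℝ) - 1] (sphere (0 : Euc (n + 1)) 1) := by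
  let P : Euc (n + 1) → (Fin n → ℝ) := fun x i => x i.succ
  have hP : LipschitzWith 1 P := LipschitzWith.of_dist_le_mul fun x y => by
    rw [NNReal.coe_one, one_mul, dist_pi_le_iff dist_nonneg]
    intro i
    rw [Real.dist_eq, dist_eq_norm]
    exact PiLp.norm_apply_le (x - y) i.succ
  have h1 := (hP.lipschitzOnWith (s := sphere 0 1)).hausdorffMeasure_image_le
    (d := ((n + 1 : ℕ) : ℝ) - 1) (by simp)
  rw [pi_hausdorff, ENNReal.coe_one, ENNReal.one_rpow, one_mul] at h1
  have h2 : IsOpen {y : Fin n → ℝ | ∑ i, y i ^ 2 < 1} :=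
    isOpen_lt (by fun_prop) continuous_const
  refine (h2.measure_pos volume ⟨0, by simp⟩).trans_le ((measure_mono ?_).trans h1)
  intro y hy
  exact ⟨capChart n y, capChart_mem (le_of_lt hy), by ext i; simp [P, capChart]⟩

/-- Caps of equal size have equal measure: a reflection interchanges them. -/
theorem cap_le_cap {N : ℕ} {d : ℝ} (hd : 0 ≤ d) {x₀ u w : Euc N} {r : ℝ} (hu : u ∈ sphere x₀ r)
    (hw : w ∈ sphere x₀ r) (ρ : ℝ) :
    μH[d] (sphere x₀ r ∩ ball w ρ) ≤ μH[d] (sphere x₀ r ∩ ball u ρ) := by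
  rw [mem_sphere_iff_norm] at hu hw
  set T := (ℝ ∙ ((w - x₀) - (u - x₀)))ᗮ.reflection with hT
  have hTw : T (w - x₀) = u - x₀ := Submodule.reflection_sub (by rw [hu, hw])
  have hTT : ∀ x, T (T x) = x := Submodule.reflection_reflection _
  have hTu : T (u - x₀) = w - x₀ := by rw [← hTw, hTT]
  let F : Euc N → Euc N := fun x => T (x - x₀) + x₀
  have hF : LipschitzWith 1 F := LipschitzWith.of_dist_le_mul fun x y => by
    simp [F, T.dist_map]
  have h1 := (hF.lipschitzOnWith (s := sphere x₀ r ∩ ball u ρ)).hausdorffMeasure_image_le hd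
  rw [ENNReal.coe_one, ENNReal.one_rpow, one_mul] at h1
  refine (measure_mono ?_).trans h1
  rintro x ⟨hx, hxw⟩
  refine ⟨F x, ⟨?_, ?_⟩, by simp [F, hTT]⟩
  · rw [mem_sphere_iff_norm] at hx ⊢
    simpa only [F, add_sub_cancel_right, T.norm_map] using hx
  · have h2 : F x - u = T (x - w) := by
      have : x - w = (x - x₀) - (w - x₀) := by abel
      rw [this, map_sub, hTw]
      simp only [F]
      abel
    rw [mem_ball_iff_norm] at hxw ⊢
    rw [h2, T.norm_map]
    exact hxw

/-- The measure of a sphere is bounded by that of any cap of proportional size, uniformly in the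
radius: by compactness of the unit sphere, boundedly many such caps cover the sphere. -/
theorem exists_cap_cover (N : ℕ) {d : ℝ} (hd : 0 ≤ d) {δ : ℝ} (hδ : 0 < δ) :
    ∃ k : ℕ, ∀ (x₀ : Euc N) (r : ℝ), 0 < r → ∀ u ∈ sphere x₀ r,
      μH[d] (sphere x₀ r) ≤ k * μH[d] (sphere x₀ r ∩ ball u (δ * r)) := by
  obtain ⟨T, hTS, hTf, hT⟩ := (isCompact_sphere (0 : Euc N) 1).finite_cover_balls hδ
  refine ⟨hTf.toFinset.card, fun x₀ r hr u hu => ?_⟩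
  have hsub : sphere x₀ r ⊆
      ⋃ e ∈ hTf.toFinset, sphere x₀ r ∩ ball (x₀ + r • e) (δ * r) := by
    intro x hx
    have hx' : ‖x - x₀‖ = r := mem_sphere_iff_norm.1 hx
    have h1 : r⁻¹ • (x - x₀) ∈ sphere (0 : Euc N) 1 := by
      rw [mem_sphere_zero_iff_norm, norm_smul, hx', Real.norm_of_nonneg (by positivity),
        inv_mul_cancel₀ hr.ne']
    obtain ⟨e, he, hxe⟩ := mem_iUnion₂.1 (hT h1)
    refine mem_iUnion₂.2 ⟨e, hTf.mem_toFinset.2 he, hx, ?_⟩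
    have h2 : x - (x₀ + r • e) = r • (r⁻¹ • (x - x₀) - e) := by
      rw [smul_sub, smul_inv_smul₀ hr.ne', sub_add_eq_sub_sub]
    rw [mem_ball_iff_norm] at hxe ⊢
    rw [h2, norm_smul, Real.norm_of_nonneg hr.le, mul_comm]
    gcongr
  calc μH[d] (sphere x₀ r)
      ≤ ∑ e ∈ hTf.toFinset, μH[d] (sphere x₀ r ∩ ball (x₀ + r • e) (δ * r)) :=
        (measure_mono hsub).trans (measure_biUnion_finset_le _ _)
    _ ≤ ∑ e ∈ hTf.toFinset, μH[d] (sphere x₀ r ∩ ball u (δ * r)) := by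
        refine Finset.sum_le_sum fun e he => cap_le_cap hd hu ?_ _
        have : ‖e‖ = 1 := mem_sphere_zero_iff_norm.1 (hTS (hTf.mem_toFinset.1 he))
        rw [mem_sphere_iff_norm, add_sub_cancel_left, norm_smul, this,
          Real.norm_of_nonneg hr.le, mul_one]
    _ = _ := by rw [Finset.sum_const, nsmul_eq_mul]

/-- Spheres are images of one another under affine maps, hence have comparable measures. -/
theorem sphere_le_sphere {N : ℕ} {d : ℝ} (hd : 0 ≤ d) (x₀ x₁ : Euc N) {r r' : ℝ} (hr : 0 < r)
    (hr' : 0 < r') :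
    ∃ k : ENNReal, k < ⊤ ∧ μH[d] (sphere x₁ r') ≤ k * μH[d] (sphere x₀ r) := by
  have hF : LipschitzWith ‖r' / r‖₊ fun x : Euc N => x₁ + (r' / r) • (x - x₀) :=
    LipschitzWith.of_dist_le_mul fun x y => by
      rw [dist_add_left, dist_smul₀, dist_sub_right]; rfl
  have h1 := (hF.lipschitzOnWith (s := sphere x₀ r)).hausdorffMeasure_image_le hd
  refine ⟨_, ENNReal.rpow_lt_top_of_nonneg hd ENNReal.coe_ne_top, (measure_mono ?_).trans h1⟩
  intro x hx
  rw [mem_sphere_iff_norm] at hx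
  refine ⟨x₀ + (r / r') • (x - x₁), ?_, ?_⟩
  · rw [mem_sphere_iff_norm, add_sub_cancel_left, norm_smul, hx,
      Real.norm_of_nonneg (by positivity), div_mul_cancel₀ _ hr'.ne']
  · simp only [add_sub_cancel_left, smul_smul]
    rw [div_mul_div_cancel₀ hr.ne', div_self hr'.ne', one_smul, add_sub_cancel]

theorem sphere_pos_lt_top {N : ℕ} (hN : 1 ≤ N) (x₀ : Euc N) {r : ℝ} (hr : 0 < r) :
    0 < μH[(N : ℝ) - 1] (sphere x₀ r) ∧ μH[(N : ℝ) - 1] (sphere x₀ r) < ⊤ := by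
  obtain ⟨n, rfl⟩ : ∃ n, N = n + 1 := ⟨N - 1, by omega⟩
  have hd : (0 : ℝ) ≤ ((n + 1 : ℕ) : ℝ) - 1 := by simp
  constructor
  · obtain ⟨k, -, h⟩ := sphere_le_sphere hd x₀ 0 hr one_pos
    refine pos_iff_ne_zero.2 fun h0 => ?_
    rw [h0, mul_zero] at h
    exact absurd h (not_le.2 (unit_sphere_pos n))
  · obtain ⟨e, he, δ, hδ, hcap⟩ := exists_cap_lt_top n
    obtain ⟨k, hk⟩ := exists_cap_cover (n + 1) hd hδ
    obtain ⟨k', hk', h⟩ := sphere_le_sphere hd 0 x₀ one_pos hr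
    have h1 := hk 0 1 one_pos e he
    rw [mul_one] at h1
    exact h.trans_lt (ENNReal.mul_lt_top hk' (h1.trans_lt
      (ENNReal.mul_lt_top (ENNReal.natCast_lt_top k) hcap)))

/-! ### Averages, and the equivalence -/

theorem average_le {X : Type*} [MeasurableSpace X] {μ : Measure X} {s : Set X} {v : X → ℝ} {M : ℝ}
    (hs : μ s < ⊤) (hM : 0 ≤ M) (h : ∀ x ∈ s, 0 ≤ v x ∧ v x ≤ M) :
    (∫ x in s, v x ∂μ) / (μ s).toReal ≤ M := by
  refine div_le_of_le_mul₀ ENNReal.toReal_nonneg hM ((Real.le_norm_self _).trans ?_)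
  refine norm_setIntegral_le_of_norm_le_const hs fun x hx => ?_
  rw [Real.norm_of_nonneg (h x hx).1]
  exact (h x hx).2

/-- If `v ≥ a` on a subset carrying a fraction at least `1 / k` of the measure of `s`, then the average
of `v ≥ 0` over `s` is at least `a / k`. -/
theorem le_average {X : Type*} [MeasurableSpace X] {μ : Measure X} {s t : Set X} {v : X → ℝ}
    {a k : ℝ} (hs : 0 < μ s) (hs' : μ s < ⊤) (hsm : MeasurableSet s) (htm : MeasurableSet t)
    (hts : t ⊆ s) (hv : IntegrableOn v s μ) (h0 : ∀ x ∈ s, 0 ≤ v x) (ha : 0 ≤ a)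
    (h : ∀ x ∈ t, a ≤ v x) (hk : 0 < k) (hμ : (μ s).toReal ≤ k * (μ t).toReal) :
    a / k ≤ (∫ x in s, v x ∂μ) / (μ s).toReal := by
  have hpos : 0 < (μ s).toReal := ENNReal.toReal_pos hs.ne' hs'.ne
  rw [le_div_iff₀ hpos]
  calc a / k * (μ s).toReal ≤ a / k * (k * (μ t).toReal) := by gcongr
    _ = a * μ.real t := by rw [measureReal_def]; field_simp
    _ ≤ ∫ x in t, v x ∂μ := setIntegral_ge_of_const_le_real htm
        ((measure_mono hts).trans_lt hs').ne h (hv.mono_set hts)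
    _ ≤ ∫ x in s, v x ∂μ := setIntegral_mono_set hv
        (ae_restrict_of_forall_mem hsm h0) hts.eventuallyLE

/-- **Remark 5.2**: equivalence of the three notions of nondegeneracy, for nonnegative locally
Lipschitz weak supersolutions of `Δ_{p(x)} v ≥ f χ_{{v>0}}`. -/
theorem nondegeneracy_equivalence
    (N : ℕ) (hN : 1 ≤ N) (Ω : Set (Euc N)) (hΩ : IsOpen Ω) (hΩc : IsConnected Ω)
    (pmin pmax : ℝ) (hp1 : 1 < pmin) (hp2 : pmin ≤ pmax)
    (p : Euc N → ℝ) (hp : ∀ x ∈ Ω, pmin ≤ p x ∧ p x ≤ pmax)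
    (hpl : ∃ K : NNReal, LipschitzOnWith K p Ω)
    (f : Euc N → ℝ) (hfm : Measurable f) (hfb : ∃ C : ℝ, ∀ x ∈ Ω, |f x| ≤ C)
    (v : Euc N → ℝ) (hv0 : ∀ x ∈ Ω, 0 ≤ v x)
    (hvl : ∀ K : Set (Euc N), IsCompact K → K ⊆ Ω → ∃ c : NNReal, LipschitzOnWith c v K)
    (hsub : ∀ φ : Euc N → ℝ, IsTest Ω φ → (∀ x, 0 ≤ φ x) →
      (∫ x in Ω, ‖gradient v x‖ ^ (p x - 2) * ⟪gradient v x, gradient φ x⟫)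
        ≤ - ∫ x in {x | x ∈ Ω ∧ 0 < v x}, f x * φ x)
    (x₀ : Euc N) (hx₀ : x₀ ∈ Ω) (hvx₀ : v x₀ = 0) :
    ((∃ c r₀ : ℝ, 0 < c ∧ 0 < r₀ ∧ ∀ r : ℝ, 0 < r → r ≤ r₀ → ball x₀ r ⊆ Ω →
        c * r ≤ (∫ x in ball x₀ r, v x) / (volume (ball x₀ r)).toReal) ↔
      (∃ c r₀ : ℝ, 0 < c ∧ 0 < r₀ ∧ ∀ r : ℝ, 0 < r → r ≤ r₀ → ball x₀ r ⊆ Ω →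
        c * r ≤ (∫ x in sphere x₀ r, v x ∂(μH[(N : ℝ) - 1]))
          / (μH[(N : ℝ) - 1] (sphere x₀ r)).toReal)) ∧
    ((∃ c r₀ : ℝ, 0 < c ∧ 0 < r₀ ∧ ∀ r : ℝ, 0 < r → r ≤ r₀ → ball x₀ r ⊆ Ω →
        c * r ≤ (∫ x in sphere x₀ r, v x ∂(μH[(N : ℝ) - 1]))
          / (μH[(N : ℝ) - 1] (sphere x₀ r)).toReal) ↔
      (∃ c r₀ : ℝ, 0 < c ∧ 0 < r₀ ∧ ∀ r : ℝ, 0 < r → r ≤ r₀ → ball x₀ r ⊆ Ω →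
        c * r ≤ sSup (v '' ball x₀ r))) := by

  obtain ⟨R, hR0, hR⟩ := Metric.nhds_basis_closedBall.mem_iff.1 (hΩ.mem_nhds hx₀)
  obtain ⟨L₀, hL₀⟩ := hvl _ (isCompact_closedBall x₀ R) hR
  obtain ⟨C, hC⟩ := hfb
  obtain ⟨Kp, hKp⟩ := hpl
  set L : NNReal := max L₀ 1 with hLdef
  have hL : 1 ≤ L := le_max_right _ _
  have hL' : (1 : ℝ) ≤ L := hL
  have hvL : LipschitzOnWith L v (closedBall x₀ R) := hL₀.weaken (le_max_left _ _)
  have hvc : ContinuousOn v Ω := fun x hx => by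
    obtain ⟨ρ, hρ, hρΩ⟩ := Metric.nhds_basis_closedBall.mem_iff.1 (hΩ.mem_nhds hx)
    obtain ⟨k, hk⟩ := hvl _ (isCompact_closedBall x ρ) hρΩ
    exact (hk.continuousOn.continuousAt (closedBall_mem_nhds x hρ)).continuousWithinAt
  have hN' : (0 : ℝ) ≤ (N : ℝ) - 1 := by
    have : (1 : ℝ) ≤ N := by exact_mod_cast hN
    linarith
  have hcb : ∀ r ≤ R, closedBall x₀ r ⊆ closedBall x₀ R := fun r hr =>
    closedBall_subset_closedBall hr
  have hbdd : ∀ r ≤ R, BddAbove (v '' ball x₀ r) := fun r hr =>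
    ((isCompact_closedBall x₀ R).bddAbove_image hvL.continuousOn).mono
      (image_mono (ball_subset_closedBall.trans (hcb r hr)))
  have hle : ∀ r, 0 < r → r ≤ R → ∀ x ∈ closedBall x₀ r, 0 ≤ v x ∧ v x ≤ sSup (v '' ball x₀ r) := by
    intro r hr hrR x hx
    refine ⟨hv0 x (hR (hcb r hrR hx)), ?_⟩
    refine ContinuousWithinAt.closure_le (g := fun _ => sSup (v '' ball x₀ r))
      (by rwa [closure_ball x₀ hr.ne']) ((hvL.continuousOn x (hcb r hrR hx)).mono
        (ball_subset_closedBall.trans (hcb r hrR))) continuousWithinAt_const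
      fun y hy => le_csSup (hbdd r hrR) (mem_image_of_mem v hy)
  have hsup0 : ∀ r, 0 < r → r ≤ R → 0 ≤ sSup (v '' ball x₀ r) := fun r hr hrR => by
    have := hle r hr hrR x₀ (mem_closedBall_self hr.le)
    exact this.1.trans this.2
  have hsubR : ∀ r ≤ R, ball x₀ r ⊆ Ω := fun r hr =>
    ball_subset_closedBall.trans ((hcb r hr).trans hR)
  -- the Lipschitz bound propagates a lower bound of `v` to a proportionally small ball
  have hprop : ∀ {a : ℝ} {x y : Euc N}, x ∈ closedBall x₀ R → y ∈ closedBall x₀ R →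
      2 * a ≤ v y → L * dist x y ≤ a → a ≤ v x := fun hx hy h1 h2 => by
    have := (abs_le.1 (hvL.dist_le_mul _ hx _ hy)).1
    linarith
  have h13 : (∃ c r₀ : ℝ, 0 < c ∧ 0 < r₀ ∧ ∀ r : ℝ, 0 < r → r ≤ r₀ → ball x₀ r ⊆ Ω →
        c * r ≤ (∫ x in ball x₀ r, v x) / (volume (ball x₀ r)).toReal) →
      (∃ c r₀ : ℝ, 0 < c ∧ 0 < r₀ ∧ ∀ r : ℝ, 0 < r → r ≤ r₀ → ball x₀ r ⊆ Ω →
        c * r ≤ sSup (v '' ball x₀ r)) := by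
    rintro ⟨c, r₀, hc, hr₀, h⟩
    refine ⟨c, min r₀ R, hc, by positivity, fun r hr hr1 hrΩ => ?_⟩
    have hrR := hr1.trans (min_le_right _ _)
    exact (h r hr (hr1.trans (min_le_left _ _)) hrΩ).trans (average_le measure_ball_lt_top
      (hsup0 r hr hrR) fun x hx => hle r hr hrR x (ball_subset_closedBall hx))
  have h23 : (∃ c r₀ : ℝ, 0 < c ∧ 0 < r₀ ∧ ∀ r : ℝ, 0 < r → r ≤ r₀ → ball x₀ r ⊆ Ω →
        c * r ≤ (∫ x in sphere x₀ r, v x ∂(μH[(N : ℝ) - 1]))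
          / (μH[(N : ℝ) - 1] (sphere x₀ r)).toReal) →
      (∃ c r₀ : ℝ, 0 < c ∧ 0 < r₀ ∧ ∀ r : ℝ, 0 < r → r ≤ r₀ → ball x₀ r ⊆ Ω →
        c * r ≤ sSup (v '' ball x₀ r)) := by
    rintro ⟨c, r₀, hc, hr₀, h⟩
    refine ⟨c, min r₀ R, hc, by positivity, fun r hr hr1 hrΩ => ?_⟩
    have hrR := hr1.trans (min_le_right _ _)
    exact (h r hr (hr1.trans (min_le_left _ _)) hrΩ).trans (average_le
      (sphere_pos_lt_top hN x₀ hr).2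
      (hsup0 r hr hrR) fun x hx => hle r hr hrR x (sphere_subset_closedBall hx))
  have h31 : (∃ c r₀ : ℝ, 0 < c ∧ 0 < r₀ ∧ ∀ r : ℝ, 0 < r → r ≤ r₀ → ball x₀ r ⊆ Ω →
        c * r ≤ sSup (v '' ball x₀ r)) →
      (∃ c r₀ : ℝ, 0 < c ∧ 0 < r₀ ∧ ∀ r : ℝ, 0 < r → r ≤ r₀ → ball x₀ r ⊆ Ω →
        c * r ≤ (∫ x in ball x₀ r, v x) / (volume (ball x₀ r)).toReal) := by
    rintro ⟨c, r₀, hc, hr₀, h⟩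
    set δ : ℝ := min (c / (8 * L)) (1 / 2) with hδ
    have hδ0 : 0 < δ := by positivity
    have hδL : L * δ ≤ c / 8 := by
      have : δ ≤ c / (8 * L) := min_le_left _ _
      rw [le_div_iff₀ (by positivity)] at this
      linarith
    refine ⟨c / 8 * δ ^ N, min r₀ R, by positivity, by positivity, fun r hr hr1 hrΩ => ?_⟩
    have hrR := hr1.trans (min_le_right _ _)
    have h1 := h (r / 2) (half_pos hr) (by linarith [hr1.trans (min_le_left _ _)])
      (hsubR _ (by linarith))
    -- a near-maximum point of the half ball has a ball around it inside `ball x₀ r`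
    obtain ⟨_, ⟨y, hy, rfl⟩, hvy⟩ := exists_lt_of_lt_csSup (b := c * (r / 2) / 2)
      ((nonempty_ball.2 (half_pos hr)).image v)
      (lt_of_lt_of_le (half_lt_self (by positivity)) h1)
    have hyR : y ∈ closedBall x₀ R := hcb r hrR (ball_subset_closedBall
      (ball_subset_ball (by linarith) hy))
    have hsubb : ball y (δ * r) ⊆ ball x₀ r := by
      refine ball_subset_ball' ?_
      have h2 : δ * r ≤ 1 / 2 * r := by gcongr; exact min_le_right _ _
      have h3 := mem_ball.1 hy
      linarith
    have hball : closedBall x₀ R ⊇ ball x₀ r := ball_subset_closedBall.trans (hcb r hrR)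
    have key := le_average (μ := volume) (s := ball x₀ r) (t := ball y (δ * r)) (v := v)
      (a := c / 8 * r) (k := (δ ^ N)⁻¹) (measure_ball_pos _ _ hr) measure_ball_lt_top
      measurableSet_ball measurableSet_ball hsubb
      ((hvL.continuousOn.integrableOn_compact (isCompact_closedBall _ _)).mono_set hball)
      (fun x hx => hv0 x (hrΩ hx)) (by positivity)
      (fun x hx => hprop (hball (hsubb hx)) hyR (by linarith) (by
        have h2 : (L : ℝ) * dist x y ≤ L * (δ * r) := by
          gcongr; exact (mem_ball.1 hx).le
        have h3 : L * δ * r ≤ c / 8 * r := by gcongr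
        linarith)) (by positivity) (by
        change volume.real _ ≤ _ * volume.real _
        rw [volume_real_ball x₀ hr, volume_real_ball y (by positivity), mul_pow, mul_assoc,
          inv_mul_cancel_left₀ (by positivity)])
    refine le_trans (le_of_eq ?_) key
    rw [div_inv_eq_mul]; ring
  have h32 : (∃ c r₀ : ℝ, 0 < c ∧ 0 < r₀ ∧ ∀ r : ℝ, 0 < r → r ≤ r₀ → ball x₀ r ⊆ Ω →
        c * r ≤ sSup (v '' ball x₀ r)) →
      (∃ c r₀ : ℝ, 0 < c ∧ 0 < r₀ ∧ ∀ r : ℝ, 0 < r → r ≤ r₀ → ball x₀ r ⊆ Ω →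
        c * r ≤ (∫ x in sphere x₀ r, v x ∂(μH[(N : ℝ) - 1]))
          / (μH[(N : ℝ) - 1] (sphere x₀ r)).toReal) := by
    rintro ⟨c, r₀, hc, hr₀, h⟩
    set δ : ℝ := c / (8 * L) with hδ
    have hδ0 : 0 < δ := by positivity
    have hδL : L * δ = c / 8 := by rw [hδ]; field_simp
    obtain ⟨k, hk⟩ := exists_cap_cover N hN' hδ0
    obtain ⟨r₁, hr₁, hosc⟩ := osc hN hΩ hp1 hp hKp.continuousOn hfm hC hvc hsub hR0 hR hL hvL
      (by positivity : 0 < c / 4)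
    refine ⟨c / 8 / (k + 1), min (min r₀ R) r₁, by positivity, by positivity,
      fun r hr hr1 hrΩ => ?_⟩
    have hrR : r ≤ R := hr1.trans ((min_le_left _ _).trans (min_le_right _ _))
    have hrr₀ : r ≤ r₀ := hr1.trans ((min_le_left _ _).trans (min_le_left _ _))
    -- otherwise `osc` with `m = (c / 4) r` bounds `v` by `(c / 2) r` in the ball
    obtain ⟨z, hz, hvz⟩ : ∃ z ∈ sphere x₀ r, c / 4 * r < v z := by
      by_contra! hcon
      have h1 : sSup (v '' ball x₀ r) ≤ c / 4 * r + c / 4 * r := by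
        refine csSup_le ((nonempty_ball.2 hr).image v) ?_
        rintro _ ⟨y, hy, rfl⟩
        exact (hosc r hr (hr1.trans (min_le_right _ _)) _ hcon y hy).le
      have h2 := h r hr hrr₀ hrΩ
      have h3 : 0 < c * r := by positivity
      linarith
    have hsph : sphere x₀ r ⊆ closedBall x₀ R := sphere_subset_closedBall.trans (hcb r hrR)
    obtain ⟨hpos, hfin⟩ := sphere_pos_lt_top hN x₀ hr
    have hint : IntegrableOn v (sphere x₀ r) (μH[(N : ℝ) - 1]) := by
      refine Integrable.mono' (g := fun _ => sSup (v '' ball x₀ r))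
        (integrableOn_const hfin.ne (by finiteness)) ((hvL.continuousOn.mono hsph).aestronglyMeasurable isClosed_sphere.measurableSet)
        (ae_restrict_of_forall_mem isClosed_sphere.measurableSet fun x hx => ?_)
      have := hle r hr hrR x (sphere_subset_closedBall hx)
      rw [Real.norm_of_nonneg this.1]
      exact this.2
    have key := le_average (μ := μH[(N : ℝ) - 1]) (s := sphere x₀ r)
      (t := sphere x₀ r ∩ ball z (δ * r)) (v := v) (a := c / 8 * r) (k := k + 1) hpos hfin
      isClosed_sphere.measurableSet (isClosed_sphere.measurableSet.inter measurableSet_ball)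
      inter_subset_left hint (fun x hx => hv0 x (hR (hsph hx))) (by positivity)
      (fun x hx => hprop (hsph hx.1) (hsph hz) (by linarith) (by
        have h2 : (L : ℝ) * dist x z ≤ L * (δ * r) := by
          gcongr; exact (mem_ball.1 hx.2).le
        rw [← mul_assoc, hδL] at h2
        exact h2)) (by positivity) (by
        have h1 : μH[(N : ℝ) - 1] (sphere x₀ r ∩ ball z (δ * r)) ≠ ⊤ :=
          ((measure_mono inter_subset_left).trans_lt hfin).ne
        have h2 := ENNReal.toReal_mono (ENNReal.mul_ne_top (ENNReal.natCast_ne_top k) h1)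
          (hk x₀ r hr z hz)
        rw [ENNReal.toReal_mul, ENNReal.toReal_natCast] at h2
        refine h2.trans ?_
        gcongr
        linarith)
    refine le_trans (le_of_eq ?_) key
    ring
  exact ⟨⟨fun h => h32 (h13 h), fun h => h31 (h23 h)⟩, h23, h32⟩
end
end
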